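/- No re-entry during a pending call of Memo-at (Lemma 11): For every run s of an execution of Memo-at and every index ℓ ∈ {0, …, |s|−1} with s[ℓ] = C(q, i), neither C(q, i) nor M(q, i) appears in the subsequence s[ℓ+1] … s[φ_s(ℓ)]. -/

import Mathlib

namespace RegexMemo

/-! ## Generic runs, `φ`, `sub`, `sub*` -/

variable {α : Type}

/-- `φ_s(ℓ, n)`: the index of the result value of the call at index `ℓ`. -/
def phiAux (isRet : α → Bool) (s : List α) (ℓ n : ℕ) : Option ℕ :=
  match h : s[ℓ]? with
  | none => none
  | some e =>
    if isRet e then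
      if n ≤ 1 then some ℓ
      else phiAux isRet s (ℓ + 1) (n - 1)
    else phiAux isRet s (ℓ + 1) (n + 1)
termination_by s.length - ℓ
decreasing_by
  all_goals
    have hl : ℓ < s.length := by
      by_contra hc
      have : s[ℓ]? = none := List.getElem?_eq_none (by omega)
      simp [this] at h
    omega

/-- `φ_s(ℓ) = φ_s(ℓ, 0)`. -/
def phi (isRet : α → Bool) (s : List α) (ℓ : ℕ) : Option ℕ := phiAux isRet s ℓ 0

/-- `sub(s, ℓ)`: replace the memoization-table invocation at index `ℓ` (an element
`M(q,i)` together with its immediately following result) by `C(q,i)` followed by the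
subsequence `s[ℓ'+1] … s[φ_s(ℓ')]`, where `ℓ'` is the first index with `s[ℓ'] = C(q,i)`.
Here `m2c` maps a memoization element `M(q,i)` to the corresponding call element `C(q,i)`
(and everything else to `none`), and `isRet` recognizes result elements. -/
def subExpand [DecidableEq α] (m2c : α → Option α) (isRet : α → Bool)
    (s : List α) (ℓ : ℕ) : Option (List α) :=
  match s[ℓ]? with
  | some e =>
    match m2c e with
    | some c =>
      match s.findIdx? (· == c) with
      | some ℓ' =>
        match phi isRet s ℓ' with
        | some m =>
          some (s.take ℓ ++ [c] ++ ((s.drop (ℓ' + 1)).take (m - ℓ')) ++ s.drop (ℓ + 2))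
        | none => none
      | none => none
    | none => none
  | none => none

/-- `sub*`: repeatedly locate the first memoization element and expand it,
until no memoization element remains. `SubStar m2c isRet s t` means `sub*(s) = t`. -/
inductive SubStar [DecidableEq α] (m2c : α → Option α) (isRet : α → Bool) :
    List α → List α → Prop where
  | done {s : List α} : s.findIdx? (fun e => (m2c e).isSome) = none →
      SubStar m2c isRet s s
  | step {s s' t : List α} {ℓ : ℕ} :
      s.findIdx? (fun e => (m2c e).isSome) = some ℓ →
      subExpand m2c isRet s ℓ = some s' →
      SubStar m2c isRet s' t →
      SubStar m2c isRet s t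

/-- The number of (recursive) calls recorded in a run: the number of `C`/`M` elements. -/
def callCount (isCall : α → Bool) (s : List α) : ℕ := (s.filter isCall).length

variable {Sigma S : Type}

/-- Results of backtracking matching: `SuccessAt i'` or `Failure`. -/
inductive Result : Type where
  | successAt : ℕ → Result
  | failure : Result
deriving DecidableEq

/-! ## Plain NFAs -/

/-- Transitions of a plain NFA. -/
inductive Trans (Sigma S : Type) : Type where
  | eps : S → Trans Sigma S
  | branch : S → S → Trans Sigma S
  | char : Sigma → S → Trans Sigma S

/-- A (plain) NFA over the alphabet `Sigma` with (finite) state type `S`: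
an initial state, a set of accepting states, and a transition function
(whose value is only relevant on non-accepting states). -/
structure NFA (Sigma S : Type) where
  q0 : S
  F : Set S
  T : S → Trans Sigma S

/-- One ε-step: an `Eps` or `Branch` transition of a non-accepting state. -/
def NFA.epsStep (A : NFA Sigma S) (q q' : S) : Prop :=
  q ∉ A.F ∧ (A.T q = Trans.eps q' ∨ (∃ q'', A.T q = Trans.branch q' q'') ∨
    (∃ q'', A.T q = Trans.branch q'' q'))

/-- The NFA has no ε-loops. -/
def NFA.NoEpsLoops (A : NFA Sigma S) : Prop :=
  ∀ q : S, ¬ Relation.TransGen A.epsStep q q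

open Classical in
/-- The in-degree `#in(q)` of a state of a plain NFA. -/
noncomputable def NFA.inDeg [Fintype S] (A : NFA Sigma S) (q : S) : ℕ :=
  (Finset.univ.filter fun q' : S => q' ∉ A.F ∧ A.T q' = Trans.eps q).card +
  (Finset.univ.filter fun q' : S => q' ∉ A.F ∧ ∃ σ, A.T q' = Trans.char σ q).card +
  (Finset.univ.filter fun q' : S => q' ∉ A.F ∧ ∃ q'', A.T q' = Trans.branch q q'').card +
  (Finset.univ.filter fun q' : S => q' ∉ A.F ∧ ∃ q'', A.T q' = Trans.branch q'' q).card +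
  (if q = A.q0 then 1 else 0)

/-- The maximal in-degree `#in(A)` of a plain NFA. -/
noncomputable def NFA.inDegMax [Fintype S] (A : NFA Sigma S) : ℕ :=
  Finset.univ.sup fun q : S => A.inDeg q

/-- Elements of runs of `Match`/`Memo`: calls `C(q,i)`, memoization-table invocations
`M(q,i)`, and results `S(i')` and `F`. -/
inductive RunElem (S : Type) : Type where
  | call : S → ℕ → RunElem S
  | memo : S → ℕ → RunElem S
  | succ : ℕ → RunElem S
  | fail : RunElem S
deriving DecidableEq

/-- The run element recording the return of a result. -/
def Result.elem {S : Type} : Result → RunElem S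
  | .successAt i => .succ i
  | .failure => .fail

def RunElem.isRet : RunElem S → Bool
  | .succ _ => true
  | .fail => true
  | _ => false

def RunElem.isCall : RunElem S → Bool
  | .call _ _ => true
  | .memo _ _ => true
  | _ => false

/-- `M(q,i) ↦ C(q,i)`. -/
def memoToCall : RunElem S → Option (RunElem S)
  | .memo q i => some (.call q i)
  | _ => none

/-- Big-step semantics (together with the produced run) of the backtracking
matching algorithm `Match` for plain NFAs:
`MatchRun A w q i r s` means the call `Match_{A,w}(q, i)` terminates with
result `r` and produces the run `s`. -/
inductive MatchRun (A : NFA Sigma S) (w : List Sigma) :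
    S → ℕ → Result → List (RunElem S) → Prop where
  | accept {q : S} {i : ℕ} : q ∈ A.F →
      MatchRun A w q i (.successAt i) [.call q i, .succ i]
  | eps {q q' : S} {i : ℕ} {r : Result} {s : List (RunElem S)} :
      q ∉ A.F → A.T q = Trans.eps q' →
      MatchRun A w q' i r s →
      MatchRun A w q i r (.call q i :: s ++ [r.elem])
  | branchSucc {q q' q'' : S} {i i' : ℕ} {s : List (RunElem S)} :
      q ∉ A.F → A.T q = Trans.branch q' q'' →
      MatchRun A w q' i (.successAt i') s →
      MatchRun A w q i (.successAt i') (.call q i :: s ++ [RunElem.succ i'])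
  | branchFail {q q' q'' : S} {i : ℕ} {r : Result} {s s' : List (RunElem S)} :
      q ∉ A.F → A.T q = Trans.branch q' q'' →
      MatchRun A w q' i .failure s →
      MatchRun A w q'' i r s' →
      MatchRun A w q i r (.call q i :: s ++ s' ++ [r.elem])
  | charSucc {q q' : S} {σ : Sigma} {i : ℕ} {r : Result} {s : List (RunElem S)} :
      q ∉ A.F → A.T q = Trans.char σ q' →
      w[i]? = some σ →
      MatchRun A w q' (i + 1) r s →
      MatchRun A w q i r (.call q i :: s ++ [r.elem])
  | charFail {q q' : S} {σ : Sigma} {i : ℕ} :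
      q ∉ A.F → A.T q = Trans.char σ q' →
      w[i]? ≠ some σ →
      MatchRun A w q i .failure [.call q i, .fail]

/-- Record `M(q,i) := Failure` in the memoization table if the result is a failure. -/
def recFail [DecidableEq S] (M : S × ℕ → Bool) (q : S) (i : ℕ) : Result → (S × ℕ → Bool)
  | .failure => fun p => if p = (q, i) then true else M p
  | _ => M

/-- Big-step semantics (with resulting memoization table and produced run) of the
memoized backtracking matching algorithm `Memo` for plain NFAs:
`MemoRun A w q i M M' r s` means the call `Memo^M_{A,w}(q, i)` terminates with result
`r`, final memoization table `M'` (where `M p = true` means `Failure` is recorded at the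
key `p`), and produces the run `s`. -/
inductive MemoRun [DecidableEq S] (A : NFA Sigma S) (w : List Sigma) :
    S → ℕ → (S × ℕ → Bool) → (S × ℕ → Bool) → Result → List (RunElem S) → Prop where
  | memoHit {q : S} {i : ℕ} {M : S × ℕ → Bool} : M (q, i) = true →
      MemoRun A w q i M M .failure [.memo q i, .fail]
  | accept {q : S} {i : ℕ} {M : S × ℕ → Bool} : M (q, i) = false → q ∈ A.F →
      MemoRun A w q i M M (.successAt i) [.call q i, .succ i]
  | eps {q q' : S} {i : ℕ} {M M' : S × ℕ → Bool} {r : Result} {s : List (RunElem S)} :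
      M (q, i) = false → q ∉ A.F → A.T q = Trans.eps q' →
      MemoRun A w q' i M M' r s →
      MemoRun A w q i M (recFail M' q i r) r (.call q i :: s ++ [r.elem])
  | branchSucc {q q' q'' : S} {i i' : ℕ} {M M' : S × ℕ → Bool} {s : List (RunElem S)} :
      M (q, i) = false → q ∉ A.F → A.T q = Trans.branch q' q'' →
      MemoRun A w q' i M M' (.successAt i') s →
      MemoRun A w q i M M' (.successAt i') (.call q i :: s ++ [RunElem.succ i'])
  | branchFail {q q' q'' : S} {i : ℕ} {M M' M'' : S × ℕ → Bool} {r : Result}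
      {s s' : List (RunElem S)} :
      M (q, i) = false → q ∉ A.F → A.T q = Trans.branch q' q'' →
      MemoRun A w q' i M M' .failure s →
      MemoRun A w q'' i M' M'' r s' →
      MemoRun A w q i M (recFail M'' q i r) r (.call q i :: s ++ s' ++ [r.elem])
  | charSucc {q q' : S} {σ : Sigma} {i : ℕ} {M M' : S × ℕ → Bool} {r : Result}
      {s : List (RunElem S)} :
      M (q, i) = false → q ∉ A.F → A.T q = Trans.char σ q' →
      w[i]? = some σ →
      MemoRun A w q' (i + 1) M M' r s →
      MemoRun A w q i M (recFail M' q i r) r (.call q i :: s ++ [r.elem])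
  | charFail {q q' : S} {σ : Sigma} {i : ℕ} {M : S × ℕ → Bool} :
      M (q, i) = false → q ∉ A.F → A.T q = Trans.char σ q' →
      w[i]? ≠ some σ →
      MemoRun A w q i M (recFail M q i .failure) .failure [.call q i, .fail]

/-! ## NFAs with sub-automata -/

/-- Kind labels of sub-automaton transitions: positive/negative look-ahead/look-behind
and atomic grouping. -/
inductive Kind : Type where
  | pla | nla | plb | nlb | at
deriving DecidableEq

mutual
/-- An NFA with sub-automata `⟨Q, q0, F, T⟩`: a list of top-level states, an initial
state, accepting states, and a transition function (relevant on non-accepting top-level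
states) whose transitions may be labelled with further NFAs with sub-automata. -/
inductive SubNFA (Sigma S : Type) : Type where
  | mk : List S → S → List S → (S → SubTrans Sigma S) → SubNFA Sigma S

/-- Transitions of an NFA with sub-automata. -/
inductive SubTrans (Sigma S : Type) : Type where
  | eps : S → SubTrans Sigma S
  | branch : S → S → SubTrans Sigma S
  | char : Sigma → S → SubTrans Sigma S
  | sub : Kind → SubNFA Sigma S → S → SubTrans Sigma S
end

/-- Top-level states `Q`. -/
def SubNFA.Q : SubNFA Sigma S → List S
  | .mk Q _ _ _ => Q

/-- Initial state `q0`. -/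
def SubNFA.q0 : SubNFA Sigma S → S
  | .mk _ q0 _ _ => q0

/-- Accepting states `F`. -/
def SubNFA.F : SubNFA Sigma S → List S
  | .mk _ _ F _ => F

/-- Transition function `T`. -/
def SubNFA.T : SubNFA Sigma S → S → SubTrans Sigma S
  | .mk _ _ _ T => T

mutual
/-- All automata occurring within an NFA with sub-automata (including itself), each
together with its nesting depth of atomic grouping (the number of enclosing
`at`-sub-automaton boundaries). -/
def SubNFA.compsD : SubNFA Sigma S → List (SubNFA Sigma S × ℕ)
  | .mk Q q0 F T => (.mk Q q0 F T, 0) :: Q.flatMap (fun q => SubTrans.subCompsD (T q))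

def SubTrans.subCompsD : SubTrans Sigma S → List (SubNFA Sigma S × ℕ)
  | .sub k A' _ => (SubNFA.compsD A').map (fun p => (p.1, p.2 + (if k = Kind.at then 1 else 0)))
  | _ => []
end

/-- All automata occurring within `A` (including `A` itself). -/
def SubNFA.comps (A : SubNFA Sigma S) : List (SubNFA Sigma S) :=
  A.compsD.map Prod.fst

/-- The set (list) of all states `P` occurring within `A`. -/
def SubNFA.allStates (A : SubNFA Sigma S) : List S :=
  A.comps.flatMap SubNFA.Q

/-- The nesting depth of atomic grouping `ν_A(q)` of a state `q` of `A`. -/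
def SubNFA.nu [DecidableEq S] (A : SubNFA Sigma S) (q : S) : ℕ :=
  (A.compsD.map (fun p => if q ∈ p.1.Q then p.2 else 0)).sum

/-- The maximal nesting depth of atomic grouping `ν(A)`. -/
def SubNFA.nuMax [DecidableEq S] (A : SubNFA Sigma S) : ℕ :=
  (A.allStates.map A.nu).foldr max 0

/-- Local wellformedness of one automaton: the initial state is a top-level state,
accepting states are top-level states, and transitions of non-accepting top-level
states lead to top-level states. -/
def SubNFA.LocalOK (B : SubNFA Sigma S) : Prop :=
  B.q0 ∈ B.Q ∧ (∀ f ∈ B.F, f ∈ B.Q) ∧ ∀ q ∈ B.Q, q ∉ B.F →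
    match B.T q with
    | .eps q' => q' ∈ B.Q
    | .branch q' q'' => q' ∈ B.Q ∧ q'' ∈ B.Q
    | .char _ q' => q' ∈ B.Q
    | .sub _ _ q' => q' ∈ B.Q

/-- Wellformedness of an NFA with sub-automata: every component automaton is locally
wellformed, and all the state lists are disjoint and duplicate-free (so that `P` is
the disjoint union of the top-level state sets of all components). -/
def SubNFA.WF (A : SubNFA Sigma S) : Prop :=
  (∀ B ∈ A.comps, B.LocalOK) ∧ A.allStates.Nodup

/-- The kind labels of all sub-automaton transitions occurring in `A`. -/
def SubNFA.kinds [DecidableEq S] (A : SubNFA Sigma S) : List Kind :=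
  A.comps.flatMap fun B =>
    (B.Q.filter (fun q => decide (q ∉ B.F))).filterMap fun q =>
      match B.T q with
      | .sub k _ _ => some k
      | _ => none

/-- A la-NFA: all kind labels are look-around labels (for simplicity, only positive
look-ahead `pla` is treated). -/
def SubNFA.IsLaNFA [DecidableEq S] (A : SubNFA Sigma S) : Prop :=
  ∀ k ∈ A.kinds, k = Kind.pla

/-- An at-NFA: all kind labels are `at` (atomic grouping). -/
def SubNFA.IsAtNFA [DecidableEq S] (A : SubNFA Sigma S) : Prop :=
  ∀ k ∈ A.kinds, k = Kind.at

/-- A (la,at)-NFA in which (for simplicity) only the kinds `pla` and `at` occur. -/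
def SubNFA.IsLaAtNFA [DecidableEq S] (A : SubNFA Sigma S) : Prop :=
  ∀ k ∈ A.kinds, k = Kind.pla ∨ k = Kind.at

/-- One global ε-step of an NFA with sub-automata: an `Eps` or `Branch` transition, or a
`Sub` transition with a look-around kind (from the transition's source to its successor),
of a non-accepting top-level state of any component automaton. -/
def SubNFA.epsStep (A : SubNFA Sigma S) (q q' : S) : Prop :=
  ∃ B ∈ A.comps, q ∈ B.Q ∧ q ∉ B.F ∧
    (B.T q = SubTrans.eps q' ∨
     (∃ q'', B.T q = SubTrans.branch q' q'') ∨
     (∃ q'', B.T q = SubTrans.branch q'' q') ∨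
     (∃ k A'', B.T q = SubTrans.sub k A'' q' ∧ k ≠ Kind.at))

/-- The NFA with sub-automata has no ε-loops. -/
def SubNFA.NoEpsLoops (A : SubNFA Sigma S) : Prop :=
  ∀ q : S, ¬ Relation.TransGen A.epsStep q q

/-- All pairs (state, transition) of non-accepting top-level states of all component
automata of `A`. -/
def SubNFA.allTransNF [DecidableEq S] (A : SubNFA Sigma S) : List (S × SubTrans Sigma S) :=
  A.comps.flatMap fun B => (B.Q.filter (fun q => decide (q ∉ B.F))).map fun q => (q, B.T q)

/-- How many of the buckets in the definition of the in-degree of `q` a given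
transition contributes to. -/
def SubTrans.hits [DecidableEq S] (t : SubTrans Sigma S) (q : S) : ℕ :=
  match t with
  | .eps q' => if q' = q then 1 else 0
  | .char _ q' => if q' = q then 1 else 0
  | .branch q' q'' => (if q' = q then 1 else 0) + (if q'' = q then 1 else 0)
  | .sub _ _ q' => if q' = q then 1 else 0

/-- The in-degree `#in(q)` of a state of an NFA with sub-automata. -/
def SubNFA.inDeg [DecidableEq S] (A : SubNFA Sigma S) (q : S) : ℕ :=
  (A.allTransNF.map (fun p => p.2.hits q)).sum +
  (if q ∈ A.comps.map SubNFA.q0 then 1 else 0)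

/-- The maximal in-degree `#in(A)`. -/
def SubNFA.inDegMax [DecidableEq S] (A : SubNFA Sigma S) : ℕ :=
  (A.allStates.map A.inDeg).foldr max 0

/-! ## run elements for `Memo-la` and `Match-(la,at)` -/

/-- Elements of runs of `Memo-la` (and of `Match-(la,at)`): calls `C(q,i)`,
memoization-table invocations `M(q,i)`, and the results `S(i')`, `S'` (bare success),
and `F`. -/
inductive LaRunElem (S : Type) : Type where
  | call : S → ℕ → LaRunElem S
  | memo : S → ℕ → LaRunElem S
  | succAt : ℕ → LaRunElem S
  | succ : LaRunElem S
  | fail : LaRunElem S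
deriving DecidableEq

def LaRunElem.isRet : LaRunElem S → Bool
  | .succAt _ => true
  | .succ => true
  | .fail => true
  | _ => false

def LaRunElem.isCall : LaRunElem S → Bool
  | .call _ _ => true
  | .memo _ _ => true
  | _ => false

def laMemoToCall : LaRunElem S → Option (LaRunElem S)
  | .memo q i => some (.call q i)
  | _ => none

def Result.laElem {S : Type} : Result → LaRunElem S
  | .successAt i => .succAt i
  | .failure => .fail

/-! ## The backtracking matching algorithm `Match-(la,at)` -/

/-- Big-step semantics (with produced run) of the backtracking matching algorithm
`Match-(la,at)` for NFAs with sub-automata: `LAMatchRun w A q i r s` means the call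
`Match-(la,at)_{A,w}(q, i)` terminates with result `r` and produces the run `s`.
For simplicity, only the look-around kind `pla` (besides `at`) is treated. -/
inductive LAMatchRun (w : List Sigma) :
    SubNFA Sigma S → S → ℕ → Result → List (LaRunElem S) → Prop where
  | accept {A : SubNFA Sigma S} {q : S} {i : ℕ} : q ∈ A.F →
      LAMatchRun w A q i (.successAt i) [.call q i, .succAt i]
  | eps {A : SubNFA Sigma S} {q q' : S} {i : ℕ} {r : Result} {s : List (LaRunElem S)} :
      q ∉ A.F → A.T q = SubTrans.eps q' →
      LAMatchRun w A q' i r s →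
      LAMatchRun w A q i r (.call q i :: s ++ [r.laElem])
  | branchSucc {A : SubNFA Sigma S} {q q' q'' : S} {i i' : ℕ} {s : List (LaRunElem S)} :
      q ∉ A.F → A.T q = SubTrans.branch q' q'' →
      LAMatchRun w A q' i (.successAt i') s →
      LAMatchRun w A q i (.successAt i') (.call q i :: s ++ [LaRunElem.succAt i'])
  | branchFail {A : SubNFA Sigma S} {q q' q'' : S} {i : ℕ} {r : Result}
      {s s' : List (LaRunElem S)} :
      q ∉ A.F → A.T q = SubTrans.branch q' q'' →
      LAMatchRun w A q' i .failure s →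
      LAMatchRun w A q'' i r s' →
      LAMatchRun w A q i r (.call q i :: s ++ s' ++ [r.laElem])
  | charSucc {A : SubNFA Sigma S} {q q' : S} {σ : Sigma} {i : ℕ} {r : Result}
      {s : List (LaRunElem S)} :
      q ∉ A.F → A.T q = SubTrans.char σ q' →
      w[i]? = some σ →
      LAMatchRun w A q' (i + 1) r s →
      LAMatchRun w A q i r (.call q i :: s ++ [r.laElem])
  | charFail {A : SubNFA Sigma S} {q q' : S} {σ : Sigma} {i : ℕ} :
      q ∉ A.F → A.T q = SubTrans.char σ q' →
      w[i]? ≠ some σ →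
      LAMatchRun w A q i .failure [.call q i, .fail]
  | plaSucc {A A' : SubNFA Sigma S} {q q' : S} {i i' : ℕ} {r : Result}
      {s1 s2 : List (LaRunElem S)} :
      q ∉ A.F → A.T q = SubTrans.sub Kind.pla A' q' →
      LAMatchRun w A' A'.q0 i (.successAt i') s1 →
      LAMatchRun w A q' i r s2 →
      LAMatchRun w A q i r (.call q i :: s1 ++ s2 ++ [r.laElem])
  | plaFail {A A' : SubNFA Sigma S} {q q' : S} {i : ℕ} {s1 : List (LaRunElem S)} :
      q ∉ A.F → A.T q = SubTrans.sub Kind.pla A' q' →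
      LAMatchRun w A' A'.q0 i .failure s1 →
      LAMatchRun w A q i .failure (.call q i :: s1 ++ [LaRunElem.fail])
  | atSucc {A A' : SubNFA Sigma S} {q q' : S} {i i' : ℕ} {r : Result}
      {s1 s2 : List (LaRunElem S)} :
      q ∉ A.F → A.T q = SubTrans.sub Kind.at A' q' →
      LAMatchRun w A' A'.q0 i (.successAt i') s1 →
      LAMatchRun w A q' i' r s2 →
      LAMatchRun w A q i r (.call q i :: s1 ++ s2 ++ [r.laElem])
  | atFail {A A' : SubNFA Sigma S} {q q' : S} {i : ℕ} {s1 : List (LaRunElem S)} :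
      q ∉ A.F → A.T q = SubTrans.sub Kind.at A' q' →
      LAMatchRun w A' A'.q0 i .failure s1 →
      LAMatchRun w A q i .failure (.call q i :: s1 ++ [LaRunElem.fail])

/-! ## `Memo-la` -/

/-- Values of the memoization table of `Memo-la`: `Failure` or `Success`. -/
inductive LaVal : Type where
  | success : LaVal
  | failure : LaVal
deriving DecidableEq

/-- Results of `Memo-la`: `SuccessAt i'`, bare `Success`, or `Failure`. -/
inductive LaResult : Type where
  | successAt : ℕ → LaResult
  | success : LaResult
  | failure : LaResult
deriving DecidableEq

def LaVal.toResult : LaVal → LaResult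
  | .success => .success
  | .failure => .failure

def LaResult.elem {S : Type} : LaResult → LaRunElem S
  | .successAt i => .succAt i
  | .success => .succ
  | .failure => .fail

def Result.toLa : Result → LaResult
  | .successAt i => .successAt i
  | .failure => .failure

/-- The final recording of `Memo-la`: `M(q,i) := Success` if the result is
`SuccessAt i'` or `Success`, and `M(q,i) := Failure` if the result is `Failure`. -/
def laRecord [DecidableEq S] (M : S × ℕ → Option LaVal) (q : S) (i : ℕ) (r : LaResult) :
    S × ℕ → Option LaVal :=
  fun p => if p = (q, i) then
    some (match r with | .failure => LaVal.failure | _ => LaVal.success)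
  else M p

/-- Big-step semantics (with resulting memoization table and produced run) of the
memoized backtracking matching algorithm `Memo-la` for la-NFAs:
`MemoLaRun w A q i M M' r s` means the call `Memo-la^M_{A,w}(q, i)` terminates with
result `r`, final memoization table `M'`, and produces the run `s`. The memoization
table is shared between the top-level automaton and all sub-automata. -/
inductive MemoLaRun [DecidableEq S] (w : List Sigma) :
    SubNFA Sigma S → S → ℕ → (S × ℕ → Option LaVal) → (S × ℕ → Option LaVal) →
    LaResult → List (LaRunElem S) → Prop where
  | memoHit {A : SubNFA Sigma S} {q : S} {i : ℕ} {M : S × ℕ → Option LaVal} {v : LaVal} :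
      M (q, i) = some v →
      MemoLaRun w A q i M M v.toResult [.memo q i, v.toResult.elem]
  | accept {A : SubNFA Sigma S} {q : S} {i : ℕ} {M : S × ℕ → Option LaVal} :
      M (q, i) = none → q ∈ A.F →
      MemoLaRun w A q i M (laRecord M q i (.successAt i)) (.successAt i)
        [.call q i, .succAt i]
  | eps {A : SubNFA Sigma S} {q q' : S} {i : ℕ} {M M' : S × ℕ → Option LaVal}
      {r : LaResult} {s : List (LaRunElem S)} :
      M (q, i) = none → q ∉ A.F → A.T q = SubTrans.eps q' →
      MemoLaRun w A q' i M M' r s →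
      MemoLaRun w A q i M (laRecord M' q i r) r (.call q i :: s ++ [r.elem])
  | branchNoFail {A : SubNFA Sigma S} {q q' q'' : S} {i : ℕ}
      {M M' : S × ℕ → Option LaVal} {r : LaResult} {s : List (LaRunElem S)} :
      M (q, i) = none → q ∉ A.F → A.T q = SubTrans.branch q' q'' →
      MemoLaRun w A q' i M M' r s → r ≠ .failure →
      MemoLaRun w A q i M (laRecord M' q i r) r (.call q i :: s ++ [r.elem])
  | branchFail {A : SubNFA Sigma S} {q q' q'' : S} {i : ℕ}
      {M M1 M2 : S × ℕ → Option LaVal} {r : LaResult} {s1 s2 : List (LaRunElem S)} :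
      M (q, i) = none → q ∉ A.F → A.T q = SubTrans.branch q' q'' →
      MemoLaRun w A q' i M M1 .failure s1 →
      MemoLaRun w A q'' i M1 M2 r s2 →
      MemoLaRun w A q i M (laRecord M2 q i r) r (.call q i :: s1 ++ s2 ++ [r.elem])
  | charSucc {A : SubNFA Sigma S} {q q' : S} {σ : Sigma} {i : ℕ}
      {M M' : S × ℕ → Option LaVal} {r : LaResult} {s : List (LaRunElem S)} :
      M (q, i) = none → q ∉ A.F → A.T q = SubTrans.char σ q' →
      w[i]? = some σ →
      MemoLaRun w A q' (i + 1) M M' r s →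
      MemoLaRun w A q i M (laRecord M' q i r) r (.call q i :: s ++ [r.elem])
  | charFail {A : SubNFA Sigma S} {q q' : S} {σ : Sigma} {i : ℕ}
      {M : S × ℕ → Option LaVal} :
      M (q, i) = none → q ∉ A.F → A.T q = SubTrans.char σ q' →
      w[i]? ≠ some σ →
      MemoLaRun w A q i M (laRecord M q i .failure) .failure [.call q i, .fail]
  | plaSucc {A A' : SubNFA Sigma S} {q q' : S} {i : ℕ}
      {M M1 M2 : S × ℕ → Option LaVal} {r1 r : LaResult} {s1 s2 : List (LaRunElem S)} :
      M (q, i) = none → q ∉ A.F → A.T q = SubTrans.sub Kind.pla A' q' →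
      MemoLaRun w A' A'.q0 i M M1 r1 s1 → r1 ≠ .failure →
      MemoLaRun w A q' i M1 M2 r s2 →
      MemoLaRun w A q i M (laRecord M2 q i r) r (.call q i :: s1 ++ s2 ++ [r.elem])
  | plaFail {A A' : SubNFA Sigma S} {q q' : S} {i : ℕ}
      {M M1 : S × ℕ → Option LaVal} {s1 : List (LaRunElem S)} :
      M (q, i) = none → q ∉ A.F → A.T q = SubTrans.sub Kind.pla A' q' →
      MemoLaRun w A' A'.q0 i M M1 .failure s1 →
      MemoLaRun w A q i M (laRecord M1 q i .failure) .failure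
        (.call q i :: s1 ++ [LaRunElem.fail])

/-! ## `Memo-at` -/

/-- Results of `Memo-at`: `SuccessAt(i', K)` with a set `K` of delayed memoization keys,
or `Failure(j)` with a nesting depth `j`. -/
inductive AtResult (S : Type) : Type where
  | successAt : ℕ → Finset (S × ℕ) → AtResult S
  | failure : ℕ → AtResult S

/-- Elements of runs of `Memo-at`: calls `C(q,i)`, memoization-table invocations
`M(q,i)`, and results `S(i')` and `F(j)`. -/
inductive AtRunElem (S : Type) : Type where
  | call : S → ℕ → AtRunElem S
  | memo : S → ℕ → AtRunElem S
  | succ : ℕ → AtRunElem S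
  | fail : ℕ → AtRunElem S
deriving DecidableEq

def AtRunElem.isRet : AtRunElem S → Bool
  | .succ _ => true
  | .fail _ => true
  | _ => false

def AtRunElem.isCall : AtRunElem S → Bool
  | .call _ _ => true
  | .memo _ _ => true
  | _ => false

def atMemoToCall : AtRunElem S → Option (AtRunElem S)
  | .memo q i => some (.call q i)
  | _ => none

def AtResult.elem {S : Type} : AtResult S → AtRunElem S
  | .successAt i _ => .succ i
  | .failure j => .fail j

/-- `f`, converting results of `Memo-at` to results of `Match-(la,at)`. -/
def AtResult.toResult {S : Type} : AtResult S → Result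
  | .successAt i _ => .successAt i
  | .failure _ => .failure

/-- The final step of `Memo-at`: on success, the key `(q,i)` is added to the set of
delayed keys. -/
def atFinal [DecidableEq S] (q : S) (i : ℕ) : AtResult S → AtResult S
  | .successAt i' K => .successAt i' (insert (q, i) K)
  | .failure j => .failure j

/-- The final recording of `Memo-at`: `M(q,i) := Failure(j)` if the result is
`Failure(j)`. -/
def atRecord [DecidableEq S] (M : S × ℕ → Option ℕ) (q : S) (i : ℕ) :
    AtResult S → (S × ℕ → Option ℕ)
  | .failure j => fun p => if p = (q, i) then some j else M p
  | _ => M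

/-- Batch recording `M(k) := Failure(j)` for every `k ∈ K`. -/
def atBatch [DecidableEq S] (M : S × ℕ → Option ℕ) (K : Finset (S × ℕ)) (j : ℕ) :
    S × ℕ → Option ℕ :=
  fun p => if p ∈ K then some j else M p

/-- Big-step semantics (with resulting memoization table and produced run) of the
memoized backtracking matching algorithm `Memo-at` for at-NFAs:
`MemoAtRun A0 w A q i M M' r s` means the call `Memo-at^M_{A0,A,w}(q, i)` (with the
whole automaton `A0` and current sub-automaton `A`) terminates with result `r`, final
memoization table `M'`, and produces the run `s`. -/
inductive MemoAtRun [DecidableEq S] (A0 : SubNFA Sigma S) (w : List Sigma) :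
    SubNFA Sigma S → S → ℕ → (S × ℕ → Option ℕ) → (S × ℕ → Option ℕ) →
    AtResult S → List (AtRunElem S) → Prop where
  | memoHit {A : SubNFA Sigma S} {q : S} {i j : ℕ} {M : S × ℕ → Option ℕ} :
      M (q, i) = some j →
      MemoAtRun A0 w A q i M M (.failure j) [.memo q i, .fail j]
  | accept {A : SubNFA Sigma S} {q : S} {i : ℕ} {M : S × ℕ → Option ℕ} :
      M (q, i) = none → q ∈ A.F →
      MemoAtRun A0 w A q i M M (.successAt i {(q, i)}) [.call q i, .succ i]
  | eps {A : SubNFA Sigma S} {q q' : S} {i : ℕ} {M M' : S × ℕ → Option ℕ}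
      {r : AtResult S} {s : List (AtRunElem S)} :
      M (q, i) = none → q ∉ A.F → A.T q = SubTrans.eps q' →
      MemoAtRun A0 w A q' i M M' r s →
      MemoAtRun A0 w A q i M (atRecord M' q i r) (atFinal q i r)
        (.call q i :: s ++ [r.elem])
  | branchNoBT {A : SubNFA Sigma S} {q q' q'' : S} {i : ℕ} {M M' : S × ℕ → Option ℕ}
      {r : AtResult S} {s : List (AtRunElem S)} :
      M (q, i) = none → q ∉ A.F → A.T q = SubTrans.branch q' q'' →
      MemoAtRun A0 w A q' i M M' r s →
      (∀ j, r = AtResult.failure j → j ≠ A0.nu q) →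
      MemoAtRun A0 w A q i M (atRecord M' q i r) (atFinal q i r)
        (.call q i :: s ++ [r.elem])
  | branchBTSucc {A : SubNFA Sigma S} {q q' q'' : S} {i i'' : ℕ} {K : Finset (S × ℕ)}
      {M M1 M2 : S × ℕ → Option ℕ} {s1 s2 : List (AtRunElem S)} :
      M (q, i) = none → q ∉ A.F → A.T q = SubTrans.branch q' q'' →
      MemoAtRun A0 w A q' i M M1 (.failure (A0.nu q)) s1 →
      MemoAtRun A0 w A q'' i M1 M2 (.successAt i'' K) s2 →
      MemoAtRun A0 w A q i M M2 (atFinal q i (.successAt i'' K))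
        (.call q i :: s1 ++ s2 ++ [AtRunElem.succ i''])
  | branchBTFail {A : SubNFA Sigma S} {q q' q'' : S} {i j' : ℕ}
      {M M1 M2 : S × ℕ → Option ℕ} {s1 s2 : List (AtRunElem S)} :
      M (q, i) = none → q ∉ A.F → A.T q = SubTrans.branch q' q'' →
      MemoAtRun A0 w A q' i M M1 (.failure (A0.nu q)) s1 →
      MemoAtRun A0 w A q'' i M1 M2 (.failure j') s2 →
      MemoAtRun A0 w A q i M (atRecord M2 q i (.failure (min (A0.nu q) j')))
        (.failure (min (A0.nu q) j'))
        (.call q i :: s1 ++ s2 ++ [AtRunElem.fail (min (A0.nu q) j')])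
  | charSucc {A : SubNFA Sigma S} {q q' : S} {σ : Sigma} {i : ℕ}
      {M M' : S × ℕ → Option ℕ} {r : AtResult S} {s : List (AtRunElem S)} :
      M (q, i) = none → q ∉ A.F → A.T q = SubTrans.char σ q' →
      w[i]? = some σ →
      MemoAtRun A0 w A q' (i + 1) M M' r s →
      MemoAtRun A0 w A q i M (atRecord M' q i r) (atFinal q i r)
        (.call q i :: s ++ [r.elem])
  | charFail {A : SubNFA Sigma S} {q q' : S} {σ : Sigma} {i : ℕ}
      {M : S × ℕ → Option ℕ} :
      M (q, i) = none → q ∉ A.F → A.T q = SubTrans.char σ q' →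
      w[i]? ≠ some σ →
      MemoAtRun A0 w A q i M (atRecord M q i (.failure (A0.nu q)))
        (.failure (A0.nu q)) [.call q i, .fail (A0.nu q)]
  | subSuccSucc {A A' : SubNFA Sigma S} {q q' : S} {i i' i'' : ℕ}
      {K' K'' : Finset (S × ℕ)} {M M1 M2 : S × ℕ → Option ℕ}
      {s1 s2 : List (AtRunElem S)} :
      M (q, i) = none → q ∉ A.F → A.T q = SubTrans.sub Kind.at A' q' →
      MemoAtRun A0 w A' A'.q0 i M M1 (.successAt i' K') s1 →
      MemoAtRun A0 w A q' i' M1 M2 (.successAt i'' K'') s2 →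
      MemoAtRun A0 w A q i M M2 (atFinal q i (.successAt i'' (K' ∪ K'')))
        (.call q i :: s1 ++ s2 ++ [AtRunElem.succ i''])
  | subSuccFail {A A' : SubNFA Sigma S} {q q' : S} {i i' j : ℕ} {K' : Finset (S × ℕ)}
      {M M1 M2 : S × ℕ → Option ℕ} {s1 s2 : List (AtRunElem S)} :
      M (q, i) = none → q ∉ A.F → A.T q = SubTrans.sub Kind.at A' q' →
      MemoAtRun A0 w A' A'.q0 i M M1 (.successAt i' K') s1 →
      MemoAtRun A0 w A q' i' M1 M2 (.failure j) s2 →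
      MemoAtRun A0 w A q i M (atRecord (atBatch M2 K' j) q i (.failure j)) (.failure j)
        (.call q i :: s1 ++ s2 ++ [AtRunElem.fail j])
  | subFailHigh {A A' : SubNFA Sigma S} {q q' : S} {i j : ℕ}
      {M M1 : S × ℕ → Option ℕ} {s1 : List (AtRunElem S)} :
      M (q, i) = none → q ∉ A.F → A.T q = SubTrans.sub Kind.at A' q' →
      MemoAtRun A0 w A' A'.q0 i M M1 (.failure j) s1 →
      A0.nu q < j →
      MemoAtRun A0 w A q i M (atRecord M1 q i (.failure (A0.nu q)))
        (.failure (A0.nu q)) (.call q i :: s1 ++ [AtRunElem.fail (A0.nu q)])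
  | subFailLow {A A' : SubNFA Sigma S} {q q' : S} {i j : ℕ}
      {M M1 : S × ℕ → Option ℕ} {s1 : List (AtRunElem S)} :
      M (q, i) = none → q ∉ A.F → A.T q = SubTrans.sub Kind.at A' q' →
      MemoAtRun A0 w A' A'.q0 i M M1 (.failure j) s1 →
      j ≤ A0.nu q →
      MemoAtRun A0 w A q i M (atRecord M1 q i (.failure j)) (.failure j)
        (.call q i :: s1 ++ [AtRunElem.fail j])

/-! ## The combined algorithm `Memo-(la,at)` -/

/-- Values of the memoization table of `Memo-(la,at)`: `Success` or `Failure(j)`. -/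
inductive LaAtVal : Type where
  | success : LaAtVal
  | failure : ℕ → LaAtVal

/-- Results of `Memo-(la,at)`: `SuccessAt(i', K)`, bare `Success`, or `Failure(j)`. -/
inductive LaAtResult (S : Type) : Type where
  | successAt : ℕ → Finset (S × ℕ) → LaAtResult S
  | success : LaAtResult S
  | failure : ℕ → LaAtResult S

def LaAtVal.toResult {S : Type} : LaAtVal → LaAtResult S
  | .success => .success
  | .failure j => .failure j

/-- `f`, converting results of `Memo-(la,at)` to results of `Match-(la,at)`
(undefined on the bare value `Success`). -/
def LaAtResult.toResult? {S : Type} : LaAtResult S → Option Result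
  | .successAt i _ => some (.successAt i)
  | .success => none
  | .failure _ => some .failure

def laAtFinal [DecidableEq S] (q : S) (i : ℕ) : LaAtResult S → LaAtResult S
  | .successAt i' K => .successAt i' (insert (q, i) K)
  | r => r

def laAtRecord [DecidableEq S] (M : S × ℕ → Option LaAtVal) (q : S) (i : ℕ) :
    LaAtResult S → (S × ℕ → Option LaAtVal)
  | .successAt _ _ => M
  | .success => fun p => if p = (q, i) then some LaAtVal.success else M p
  | .failure j => fun p => if p = (q, i) then some (LaAtVal.failure j) else M p

def laAtBatch [DecidableEq S] (M : S × ℕ → Option LaAtVal) (K : Finset (S × ℕ))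
    (v : LaAtVal) : S × ℕ → Option LaAtVal :=
  fun p => if p ∈ K then some v else M p

/-- Big-step semantics (with resulting memoization table and the number of recursive
calls made) of the combined memoized backtracking matching algorithm `Memo-(la,at)`:
`MemoLaAtRun w A0 A q i M M' r n` means the call `Memo-(la,at)^M_{A0,A,w}(q, i)`
terminates with result `r`, final memoization table `M'`, making `n` calls in total.
On a positive look-ahead transition, the sub-automaton becomes the new whole automaton
(so nesting depths of atomic grouping are reset by look-around operators). -/
inductive MemoLaAtRun [DecidableEq S] (w : List Sigma) :
    SubNFA Sigma S → SubNFA Sigma S → S → ℕ →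
    (S × ℕ → Option LaAtVal) → (S × ℕ → Option LaAtVal) → LaAtResult S → ℕ → Prop where
  | memoHit {A0 A : SubNFA Sigma S} {q : S} {i : ℕ} {M : S × ℕ → Option LaAtVal}
      {v : LaAtVal} :
      M (q, i) = some v →
      MemoLaAtRun w A0 A q i M M v.toResult 1
  | accept {A0 A : SubNFA Sigma S} {q : S} {i : ℕ} {M : S × ℕ → Option LaAtVal} :
      M (q, i) = none → q ∈ A.F →
      MemoLaAtRun w A0 A q i M M (.successAt i {(q, i)}) 1
  | eps {A0 A : SubNFA Sigma S} {q q' : S} {i : ℕ} {M M' : S × ℕ → Option LaAtVal}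
      {r : LaAtResult S} {n : ℕ} :
      M (q, i) = none → q ∉ A.F → A.T q = SubTrans.eps q' →
      MemoLaAtRun w A0 A q' i M M' r n →
      MemoLaAtRun w A0 A q i M (laAtRecord M' q i (laAtFinal q i r)) (laAtFinal q i r)
        (n + 1)
  | branchNoBT {A0 A : SubNFA Sigma S} {q q' q'' : S} {i : ℕ}
      {M M' : S × ℕ → Option LaAtVal} {r : LaAtResult S} {n : ℕ} :
      M (q, i) = none → q ∉ A.F → A.T q = SubTrans.branch q' q'' →
      MemoLaAtRun w A0 A q' i M M' r n →
      (∀ j, r = LaAtResult.failure j → j ≠ A0.nu q) →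
      MemoLaAtRun w A0 A q i M (laAtRecord M' q i (laAtFinal q i r)) (laAtFinal q i r)
        (n + 1)
  | branchBTFail {A0 A : SubNFA Sigma S} {q q' q'' : S} {i j' : ℕ}
      {M M1 M2 : S × ℕ → Option LaAtVal} {n1 n2 : ℕ} :
      M (q, i) = none → q ∉ A.F → A.T q = SubTrans.branch q' q'' →
      MemoLaAtRun w A0 A q' i M M1 (.failure (A0.nu q)) n1 →
      MemoLaAtRun w A0 A q'' i M1 M2 (.failure j') n2 →
      MemoLaAtRun w A0 A q i M
        (laAtRecord M2 q i (.failure (min (A0.nu q) j')))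
        (.failure (min (A0.nu q) j')) (n1 + n2 + 1)
  | branchBTOther {A0 A : SubNFA Sigma S} {q q' q'' : S} {i : ℕ}
      {M M1 M2 : S × ℕ → Option LaAtVal} {r : LaAtResult S} {n1 n2 : ℕ} :
      M (q, i) = none → q ∉ A.F → A.T q = SubTrans.branch q' q'' →
      MemoLaAtRun w A0 A q' i M M1 (.failure (A0.nu q)) n1 →
      MemoLaAtRun w A0 A q'' i M1 M2 r n2 →
      (∀ j, r ≠ LaAtResult.failure j) →
      MemoLaAtRun w A0 A q i M (laAtRecord M2 q i (laAtFinal q i r)) (laAtFinal q i r)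
        (n1 + n2 + 1)
  | charSucc {A0 A : SubNFA Sigma S} {q q' : S} {σ : Sigma} {i : ℕ}
      {M M' : S × ℕ → Option LaAtVal} {r : LaAtResult S} {n : ℕ} :
      M (q, i) = none → q ∉ A.F → A.T q = SubTrans.char σ q' →
      w[i]? = some σ →
      MemoLaAtRun w A0 A q' (i + 1) M M' r n →
      MemoLaAtRun w A0 A q i M (laAtRecord M' q i (laAtFinal q i r)) (laAtFinal q i r)
        (n + 1)
  | charFail {A0 A : SubNFA Sigma S} {q q' : S} {σ : Sigma} {i : ℕ}
      {M : S × ℕ → Option LaAtVal} :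
      M (q, i) = none → q ∉ A.F → A.T q = SubTrans.char σ q' →
      w[i]? ≠ some σ →
      MemoLaAtRun w A0 A q i M (laAtRecord M q i (.failure (A0.nu q)))
        (.failure (A0.nu q)) 1
  | plaSuccAt {A0 A A' : SubNFA Sigma S} {q q' : S} {i i' : ℕ} {K' : Finset (S × ℕ)}
      {M M1 M2 : S × ℕ → Option LaAtVal} {r : LaAtResult S} {n1 n2 : ℕ} :
      M (q, i) = none → q ∉ A.F → A.T q = SubTrans.sub Kind.pla A' q' →
      MemoLaAtRun w A' A' A'.q0 i M M1 (.successAt i' K') n1 →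
      MemoLaAtRun w A0 A q' i (laAtBatch M1 K' LaAtVal.success) M2 r n2 →
      MemoLaAtRun w A0 A q i M (laAtRecord M2 q i (laAtFinal q i r)) (laAtFinal q i r)
        (n1 + n2 + 1)
  | plaBare {A0 A A' : SubNFA Sigma S} {q q' : S} {i : ℕ}
      {M M1 M2 : S × ℕ → Option LaAtVal} {r : LaAtResult S} {n1 n2 : ℕ} :
      M (q, i) = none → q ∉ A.F → A.T q = SubTrans.sub Kind.pla A' q' →
      MemoLaAtRun w A' A' A'.q0 i M M1 .success n1 →
      MemoLaAtRun w A0 A q' i M1 M2 r n2 →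
      MemoLaAtRun w A0 A q i M (laAtRecord M2 q i (laAtFinal q i r)) (laAtFinal q i r)
        (n1 + n2 + 1)
  | plaFail {A0 A A' : SubNFA Sigma S} {q q' : S} {i j : ℕ}
      {M M1 : S × ℕ → Option LaAtVal} {n1 : ℕ} :
      M (q, i) = none → q ∉ A.F → A.T q = SubTrans.sub Kind.pla A' q' →
      MemoLaAtRun w A' A' A'.q0 i M M1 (.failure j) n1 →
      MemoLaAtRun w A0 A q i M (laAtRecord M1 q i (.failure (A0.nu q)))
        (.failure (A0.nu q)) (n1 + 1)
  | atSuccSucc {A0 A A' : SubNFA Sigma S} {q q' : S} {i i' i'' : ℕ}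
      {K' K'' : Finset (S × ℕ)} {M M1 M2 : S × ℕ → Option LaAtVal} {n1 n2 : ℕ} :
      M (q, i) = none → q ∉ A.F → A.T q = SubTrans.sub Kind.at A' q' →
      MemoLaAtRun w A0 A' A'.q0 i M M1 (.successAt i' K') n1 →
      MemoLaAtRun w A0 A q' i' M1 M2 (.successAt i'' K'') n2 →
      MemoLaAtRun w A0 A q i M M2
        (laAtFinal q i (.successAt i'' (K' ∪ K''))) (n1 + n2 + 1)
  | atSuccBare {A0 A A' : SubNFA Sigma S} {q q' : S} {i i' : ℕ} {K' : Finset (S × ℕ)}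
      {M M1 M2 : S × ℕ → Option LaAtVal} {n1 n2 : ℕ} :
      M (q, i) = none → q ∉ A.F → A.T q = SubTrans.sub Kind.at A' q' →
      MemoLaAtRun w A0 A' A'.q0 i M M1 (.successAt i' K') n1 →
      MemoLaAtRun w A0 A q' i' M1 M2 .success n2 →
      MemoLaAtRun w A0 A q i M
        (laAtRecord (laAtBatch M2 K' LaAtVal.success) q i .success) .success
        (n1 + n2 + 1)
  | atSuccFail {A0 A A' : SubNFA Sigma S} {q q' : S} {i i' j : ℕ} {K' : Finset (S × ℕ)}
      {M M1 M2 : S × ℕ → Option LaAtVal} {n1 n2 : ℕ} :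
      M (q, i) = none → q ∉ A.F → A.T q = SubTrans.sub Kind.at A' q' →
      MemoLaAtRun w A0 A' A'.q0 i M M1 (.successAt i' K') n1 →
      MemoLaAtRun w A0 A q' i' M1 M2 (.failure j) n2 →
      MemoLaAtRun w A0 A q i M
        (laAtRecord (laAtBatch M2 K' (LaAtVal.failure j)) q i (.failure j))
        (.failure j) (n1 + n2 + 1)
  | atBare {A0 A A' : SubNFA Sigma S} {q q' : S} {i : ℕ}
      {M M1 : S × ℕ → Option LaAtVal} {n1 : ℕ} :
      M (q, i) = none → q ∉ A.F → A.T q = SubTrans.sub Kind.at A' q' →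
      MemoLaAtRun w A0 A' A'.q0 i M M1 .success n1 →
      MemoLaAtRun w A0 A q i M (laAtRecord M1 q i .success) .success (n1 + 1)
  | atFailHigh {A0 A A' : SubNFA Sigma S} {q q' : S} {i j : ℕ}
      {M M1 : S × ℕ → Option LaAtVal} {n1 : ℕ} :
      M (q, i) = none → q ∉ A.F → A.T q = SubTrans.sub Kind.at A' q' →
      MemoLaAtRun w A0 A' A'.q0 i M M1 (.failure j) n1 →
      A0.nu q < j →
      MemoLaAtRun w A0 A q i M (laAtRecord M1 q i (.failure (A0.nu q)))
        (.failure (A0.nu q)) (n1 + 1)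
  | atFailLow {A0 A A' : SubNFA Sigma S} {q q' : S} {i j : ℕ}
      {M M1 : S × ℕ → Option LaAtVal} {n1 : ℕ} :
      M (q, i) = none → q ∉ A.F → A.T q = SubTrans.sub Kind.at A' q' →
      MemoLaAtRun w A0 A' A'.q0 i M M1 (.failure j) n1 →
      j ≤ A0.nu q →
      MemoLaAtRun w A0 A q i M (laAtRecord M1 q i (.failure j)) (.failure j) (n1 + 1)



/-! ## Structural facts about component automata -/

section Comps

theorem compsD_unfold (A : SubNFA Sigma S) :
    A.compsD = (A, 0) :: A.Q.flatMap (fun q => SubTrans.subCompsD (A.T q)) := by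
  cases A with
  | mk Q q0 F T => simp [SubNFA.compsD, SubNFA.Q, SubNFA.T]

theorem compsD_self (A : SubNFA Sigma S) : (A, 0) ∈ A.compsD := by
  rw [compsD_unfold]; simp

mutual
theorem compsD_closed : (A : SubNFA Sigma S) → ∀ (B : SubNFA Sigma S) (d : ℕ) (q q' : S)
    (A' : SubNFA Sigma S), (B, d) ∈ A.compsD → q ∈ B.Q →
    B.T q = SubTrans.sub Kind.at A' q' → (A', d + 1) ∈ A.compsD
  | .mk Q q0 F T => by
    intro B d q q' A' hB hq hT
    rw [compsD_unfold] at hB ⊢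
    simp only [List.mem_cons, Prod.mk.injEq, List.mem_flatMap, SubNFA.Q, SubNFA.T] at hB ⊢
    right
    rcases hB with ⟨rfl, rfl⟩ | ⟨e, he, hB⟩
    · refine ⟨q, hq, ?_⟩
      simp only [SubNFA.T] at hT
      rw [hT]
      simp only [SubTrans.subCompsD, List.mem_map]
      exact ⟨(A', 0), compsD_self A', by simp⟩
    · exact ⟨e, he, subCompsD_closed (T e) B d q q' A' hB hq hT⟩

theorem subCompsD_closed : (t : SubTrans Sigma S) → ∀ (B : SubNFA Sigma S) (d : ℕ) (q q' : S)
    (A' : SubNFA Sigma S), (B, d) ∈ t.subCompsD → q ∈ B.Q →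
    B.T q = SubTrans.sub Kind.at A' q' → (A', d + 1) ∈ t.subCompsD
  | .sub k A1 _ => by
    intro B d q q' A' hB hq hT
    simp only [SubTrans.subCompsD, List.mem_map, Prod.mk.injEq, Prod.exists] at hB ⊢
    obtain ⟨B1, d1, h, rfl, rfl⟩ := hB
    exact ⟨A', d1 + 1, compsD_closed A1 B1 d1 q q' A' h hq hT, rfl, by omega⟩
  | .eps _ => by intro B d q q' A' hB; simp [SubTrans.subCompsD] at hB
  | .branch _ _ => by intro B d q q' A' hB; simp [SubTrans.subCompsD] at hB
  | .char _ _ => by intro B d q q' A' hB; simp [SubTrans.subCompsD] at hB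
end

theorem allStates_eq (A : SubNFA Sigma S) :
    A.allStates = A.compsD.flatMap (fun p => p.1.Q) := by
  simp [SubNFA.allStates, SubNFA.comps, List.flatMap_map]

theorem flatMap_unique {β γ : Type} {l : List β} {f : β → List γ} (h : (l.flatMap f).Nodup)
    {x y : β} (hx : x ∈ l) (hy : y ∈ l) {c : γ} (hcx : c ∈ f x) (hcy : c ∈ f y) : x = y := by
  by_contra hne
  rw [List.nodup_flatMap] at h
  have hs : Std.Symm (Function.onFun (List.Disjoint (α := γ)) f) := ⟨fun a b hab => List.Disjoint.symm hab⟩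
  exact h.2.forall hx hy hne hcx hcy

theorem comps_unique (A : SubNFA Sigma S) (h : A.allStates.Nodup) {B B' : SubNFA Sigma S}
    {d d' : ℕ} {q : S} (hB : (B, d) ∈ A.compsD) (hB' : (B', d') ∈ A.compsD)
    (hq : q ∈ B.Q) (hq' : q ∈ B'.Q) : B = B' ∧ d = d' := by
  rw [allStates_eq] at h
  have := flatMap_unique h hB hB' hq hq'
  simpa using this

theorem sum_unique {β γ : Type} [DecidableEq γ] (l : List β) (f : β → List γ) (g : β → ℕ)
    (h : (l.flatMap f).Nodup) (c : γ) (x : β) (hx : x ∈ l) (hc : c ∈ f x) :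
    (l.map (fun p => if c ∈ f p then g p else 0)).sum = g x := by
  induction l with
  | nil => simp at hx
  | cons a l ih =>
    rw [List.flatMap_cons, List.nodup_append] at h
    rw [List.map_cons, List.sum_cons]
    by_cases ha : c ∈ f a
    · have hz : ∀ p ∈ l, c ∉ f p := fun p hp hcp =>
        h.2.2 c ha c (List.mem_flatMap.2 ⟨p, hp, hcp⟩) rfl
      have hxa : x = a := by
        rcases List.mem_cons.1 hx with h1 | h1
        · exact h1
        · exact absurd hc (hz x h1)
      subst hxa
      have h0 : (l.map (fun p => if c ∈ f p then g p else 0)).sum = 0 := by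
        apply List.sum_eq_zero
        intro y hy
        obtain ⟨p, hp, rfl⟩ := List.mem_map.1 hy
        simp [hz p hp]
      rw [h0]; simp [ha]
    · have hxl : x ∈ l := by
        rcases List.mem_cons.1 hx with h1 | h1
        · subst h1; exact absurd hc ha
        · exact h1
      rw [ih h.2.1 hxl]; simp [ha]

theorem nu_eq [DecidableEq S] (A : SubNFA Sigma S) (h : A.allStates.Nodup)
    {B : SubNFA Sigma S} {d : ℕ} {q : S} (hB : (B, d) ∈ A.compsD) (hq : q ∈ B.Q) :
    A.nu q = d := by
  rw [allStates_eq] at h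
  exact sum_unique A.compsD (fun p => p.1.Q) (fun p => p.2) h q (B, d) hB hq

/-- States of the components of a transition. -/
def stT (t : SubTrans Sigma S) : List S := t.subCompsD.flatMap (fun p => p.1.Q)

theorem stT_sub (k : Kind) (A : SubNFA Sigma S) (x : S) :
    stT (SubTrans.sub k A x) = A.allStates := by
  simp [stT, SubTrans.subCompsD, allStates_eq, List.flatMap_map]

theorem allStates_unfold (A : SubNFA Sigma S) :
    A.allStates = A.Q ++ A.Q.flatMap (fun q => stT (A.T q)) := by
  rw [allStates_eq, compsD_unfold, List.flatMap_cons, List.flatMap_assoc]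
  rfl

theorem mem_stT {t : SubTrans Sigma S} {B : SubNFA Sigma S} {d : ℕ} {y : S}
    (hB : (B, d) ∈ t.subCompsD) (hy : y ∈ B.Q) : y ∈ stT t :=
  List.mem_flatMap.2 ⟨_, hB, hy⟩

mutual
theorem link_unique : (A : SubNFA Sigma S) → A.allStates.Nodup →
    ∀ (B B' E E' : SubNFA Sigma S) (d d' : ℕ) (c c' x x' y : S),
    (B, d) ∈ A.compsD → (B', d') ∈ A.compsD → c ∈ B.Q → c' ∈ B'.Q →
    B.T c = SubTrans.sub Kind.at E x → B'.T c' = SubTrans.sub Kind.at E' x' →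
    y ∈ E.Q → y ∈ E'.Q → c = c'
  | .mk Q q0 F T => by
    intro hN B B' E E' d d' c c' x x' y hB hB' hc hc' hT hT' hy hy'
    rw [allStates_unfold] at hN
    simp only [SubNFA.Q, SubNFA.T] at hN
    have hNf := (List.nodup_append.1 hN).2.1
    have key : ∀ (B' E E' : SubNFA Sigma S) (d' : ℕ) (c c' e x x' : S), c ∈ Q → e ∈ Q →
        (B', d') ∈ (T e).subCompsD → c' ∈ B'.Q →
        T c = SubTrans.sub Kind.at E x → B'.T c' = SubTrans.sub Kind.at E' x' →
        y ∈ E.Q → y ∈ E'.Q → False := by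
      intro B' E E' d' c c' e x x' hc he hB' hc' hT hT' hy hy'
      have h1 : (E', d' + 1) ∈ (T e).subCompsD := subCompsD_closed _ _ _ _ _ _ hB' hc' hT'
      have h0 : (E, 1) ∈ (T c).subCompsD := by
        rw [hT]
        simp only [SubTrans.subCompsD, List.mem_map]
        exact ⟨(E, 0), compsD_self E, by simp⟩
      have hec : e = c := flatMap_unique hNf he hc (mem_stT h1 hy') (mem_stT h0 hy)
      subst hec
      have hNe : (stT (T e)).Nodup := (List.nodup_flatMap.1 hNf).1 e he
      have := flatMap_unique hNe h1 h0 hy' hy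
      rw [hT] at hB'
      simp only [SubTrans.subCompsD, List.mem_map, Prod.mk.injEq, Prod.exists] at hB'
      obtain ⟨B1, d1, h, rfl, rfl⟩ := hB'
      simp at this
    rw [compsD_unfold] at hB hB'
    simp only [List.mem_cons, Prod.mk.injEq, List.mem_flatMap, SubNFA.Q, SubNFA.T] at hB hB'
    rcases hB with ⟨rfl, rfl⟩ | ⟨e, he, hB⟩ <;> rcases hB' with ⟨rfl, rfl⟩ | ⟨e', he', hB'⟩
    · simp only [SubNFA.Q, SubNFA.T] at hc hc' hT hT'
      refine flatMap_unique hNf hc hc' (c := y) ?_ ?_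
      · simp only [hT, stT_sub, allStates_unfold E]; simp [hy]
      · simp only [hT', stT_sub, allStates_unfold E']; simp [hy']
    · simp only [SubNFA.Q, SubNFA.T] at hc hT
      exact (key B' E E' d' c c' e' x x' hc he' hB' hc' hT hT' hy hy').elim
    · simp only [SubNFA.Q, SubNFA.T] at hc' hT'
      exact (key B E' E d c' c e x' x hc' he hB hc hT' hT hy' hy).elim
    · have h1 := subCompsD_closed _ _ _ _ _ _ hB hc hT
      have h2 := subCompsD_closed _ _ _ _ _ _ hB' hc' hT'
      have hee : e = e' := flatMap_unique hNf he he' (mem_stT h1 hy) (mem_stT h2 hy')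
      subst hee
      exact link_uniqueT (T e) ((List.nodup_flatMap.1 hNf).1 e he)
        B B' E E' d d' c c' x x' y hB hB' hc hc' hT hT' hy hy'

theorem link_uniqueT : (t : SubTrans Sigma S) → (stT t).Nodup →
    ∀ (B B' E E' : SubNFA Sigma S) (d d' : ℕ) (c c' x x' y : S),
    (B, d) ∈ t.subCompsD → (B', d') ∈ t.subCompsD → c ∈ B.Q → c' ∈ B'.Q →
    B.T c = SubTrans.sub Kind.at E x → B'.T c' = SubTrans.sub Kind.at E' x' →
    y ∈ E.Q → y ∈ E'.Q → c = c'
  | .sub k A1 z => by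
    intro hN B B' E E' d d' c c' x x' y hB hB' hc hc' hT hT' hy hy'
    rw [stT_sub] at hN
    simp only [SubTrans.subCompsD, List.mem_map, Prod.mk.injEq, Prod.exists] at hB hB'
    obtain ⟨B1, d1, h, rfl, rfl⟩ := hB
    obtain ⟨B2, d2, h2, rfl, rfl⟩ := hB'
    exact link_unique A1 hN B1 B2 E E' d1 d2 c c' x x' y h h2 hc hc' hT hT' hy hy'
  | .eps _ => by intro _ B B' E E' d d' c c' x x' y hB; simp [SubTrans.subCompsD] at hB
  | .branch _ _ => by intro _ B B' E E' d d' c c' x x' y hB; simp [SubTrans.subCompsD] at hB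
  | .char _ _ => by intro _ B B' E E' d d' c c' x x' y hB; simp [SubTrans.subCompsD] at hB
end

end Comps

/-! ## The call index `φ` on lists -/

section Phi

/-- List version of `phiAux`. -/
def phiL (isRet : α → Bool) : List α → ℕ → Option ℕ
  | [], _ => none
  | e :: l, n =>
    if isRet e then
      if n ≤ 1 then some 0 else (phiL isRet l (n - 1)).map (· + 1)
    else (phiL isRet l (n + 1)).map (· + 1)

theorem phiAux_eq (isRet : α → Bool) (s : List α) (l : List α) :
    ∀ (ℓ n : ℕ), s.drop ℓ = l → phiAux isRet s ℓ n = (phiL isRet l n).map (· + ℓ) := by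
  induction l with
  | nil =>
    intro ℓ n h
    have : s[ℓ]? = none := by
      rw [List.getElem?_eq_none]; simpa using h
    rw [phiAux]
    split
    · simp [phiL]
    · simp_all
  | cons e l ih =>
    intro ℓ n h
    have he : s[ℓ]? = some e := by
      have : (s.drop ℓ)[0]? = some e := by rw [h]; rfl
      simpa using this
    have hd : s.drop (ℓ + 1) = l := by
      rw [← List.tail_drop, h]; rfl
    rw [phiAux]
    split
    · simp_all
    · rename_i e' he'
      have : e' = e := by rw [he] at he'; exact (Option.some.inj he').symm
      subst this
      rw [phiL, ih (ℓ + 1) _ hd, ih (ℓ + 1) _ hd]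
      have hf : ((fun x => x + ℓ) ∘ fun x => x + 1 : ℕ → ℕ) = fun x => x + (ℓ + 1) := by
        funext x; simp only [Function.comp]; omega
      split_ifs <;> simp [hf]

/-- Scanning over `b` at positive depth has no effect. -/
def Neutral (isRet : α → Bool) (b : List α) : Prop :=
  ∀ t n, 1 ≤ n → phiL isRet (b ++ t) n = (phiL isRet t n).map (· + b.length)

theorem Neutral.nil (isRet : α → Bool) : Neutral isRet [] := by
  intro t n _; simp

theorem Neutral.append {isRet : α → Bool} {a b : List α} (ha : Neutral isRet a)
    (hb : Neutral isRet b) : Neutral isRet (a ++ b) := by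
  intro t n hn
  rw [List.append_assoc, ha _ _ hn, hb _ _ hn]
  have hf : ((fun x => x + a.length) ∘ fun x => x + b.length : ℕ → ℕ)
      = fun x => x + (a.length + b.length) := by
    funext x; simp only [Function.comp]; omega
  simp [hf]

theorem Neutral.block {isRet : α → Bool} {b : List α} (hb : Neutral isRet b) {c e : α}
    (hc : isRet c = false) (he : isRet e = true) : Neutral isRet (c :: b ++ [e]) := by
  intro t n hn
  have h1 : c :: b ++ [e] ++ t = c :: (b ++ (e :: t)) := by simp
  rw [h1, phiL, hb _ (n + 1) (by omega), phiL]
  have hn2 : ¬ (n + 1 ≤ 1) := by omega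
  simp only [hc, he, hn2, if_true, if_false, Option.map_map, Nat.add_sub_cancel,
    Bool.false_eq_true]
  congr 1
  funext x; simp; omega

theorem Neutral.block_zero {isRet : α → Bool} {b : List α} (hb : Neutral isRet b) {c e : α}
    (hc : isRet c = false) (he : isRet e = true) (t : List α) :
    phiL isRet (c :: ((b ++ [e]) ++ t)) 0 = some (b ++ [e]).length := by
  have h1 : b ++ [e] ++ t = b ++ (e :: t) := by simp
  rw [h1, phiL, hb _ (0 + 1) (by omega), phiL]
  simp [hc, he]

/-- No re-entry, as a property of lists. -/
def NoRe : List (AtRunElem S) → Prop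
  | [] => True
  | e :: l => (∀ q i, e = AtRunElem.call q i → ∃ u v, l = u ++ v ∧
      (∀ t, phiL AtRunElem.isRet (e :: (u ++ t)) 0 = some u.length) ∧
      AtRunElem.call q i ∉ u ∧ AtRunElem.memo q i ∉ u) ∧ NoRe l

theorem NoRe.append {a b : List (AtRunElem S)} (ha : NoRe a) (hb : NoRe b) :
    NoRe (a ++ b) := by
  induction a with
  | nil => exact hb
  | cons e l ih =>
    refine ⟨?_, ih ha.2⟩
    intro q i he
    obtain ⟨u, v, h1, h2⟩ := ha.1 q i he
    exact ⟨u, v ++ b, by rw [h1]; simp, h2⟩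

theorem NoRe.drop {s : List (AtRunElem S)} (h : NoRe s) : ∀ ℓ, NoRe (s.drop ℓ) := by
  induction s with
  | nil => intro ℓ; simp [NoRe]
  | cons e l ih =>
    intro ℓ
    cases ℓ with
    | zero => exact h
    | succ k => exact ih h.2 k

theorem NoRe.final {s : List (AtRunElem S)} (h : NoRe s) {q : S} {i ℓ m : ℕ}
    (hc : s[ℓ]? = some (AtRunElem.call q i))
    (hφ : phi AtRunElem.isRet s ℓ = some m) :
    ∀ ℓ', ℓ + 1 ≤ ℓ' → ℓ' ≤ m →
      s[ℓ']? ≠ some (AtRunElem.call q i) ∧ s[ℓ']? ≠ some (AtRunElem.memo q i) := by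
  have hd : s.drop ℓ = AtRunElem.call q i :: s.drop (ℓ + 1) := by
    obtain ⟨hlt, he⟩ := List.getElem?_eq_some_iff.1 hc
    rw [List.drop_eq_getElem_cons hlt, he]
  have h1 := h.drop ℓ
  rw [hd] at h1
  obtain ⟨u, v, h2, h3, h4, h5⟩ := h1.1 q i rfl
  rw [phi, phiAux_eq _ _ _ ℓ 0 hd, h2, h3 v] at hφ
  simp only [Option.map_some, Option.some.injEq] at hφ
  intro ℓ' hl hm
  have hu : s[ℓ']? = u[ℓ' - (ℓ + 1)]? := by
    have : s[ℓ']? = (s.drop (ℓ + 1))[ℓ' - (ℓ + 1)]? := by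
      rw [List.getElem?_drop]; congr 1; omega
    rw [this, h2, List.getElem?_append_left (by omega)]
  rw [hu]
  exact ⟨fun hh => h4 (List.mem_of_getElem? hh), fun hh => h5 (List.mem_of_getElem? hh)⟩

end Phi

/-! ## Local matching without memoization, with call counts -/

section Local

/-- Local matching in a component without memoization, counting calls. -/
inductive Mt (w : List Sigma) : SubNFA Sigma S → S → ℕ → Option ℕ → ℕ → Prop where
  | acc {A : SubNFA Sigma S} {q : S} {i : ℕ} : q ∈ A.F → Mt w A q i (some i) 1
  | eps {A : SubNFA Sigma S} {q q' : S} {i n : ℕ} {r : Option ℕ} : q ∉ A.F →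
      A.T q = SubTrans.eps q' → Mt w A q' i r n → Mt w A q i r (n + 1)
  | brS {A : SubNFA Sigma S} {q q' q'' : S} {i i' n : ℕ} : q ∉ A.F →
      A.T q = SubTrans.branch q' q'' → Mt w A q' i (some i') n → Mt w A q i (some i') (n + 1)
  | brF {A : SubNFA Sigma S} {q q' q'' : S} {i n1 n2 : ℕ} {r : Option ℕ} : q ∉ A.F →
      A.T q = SubTrans.branch q' q'' → Mt w A q' i none n1 → Mt w A q'' i r n2 →
      Mt w A q i r (n1 + n2 + 1)
  | chS {A : SubNFA Sigma S} {q q' : S} {σ : Sigma} {i n : ℕ} {r : Option ℕ} : q ∉ A.F →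
      A.T q = SubTrans.char σ q' → w[i]? = some σ → Mt w A q' (i + 1) r n →
      Mt w A q i r (n + 1)
  | chF {A : SubNFA Sigma S} {q q' : S} {σ : Sigma} {i : ℕ} : q ∉ A.F →
      A.T q = SubTrans.char σ q' → w[i]? ≠ some σ → Mt w A q i none 1
  | subS {A A' : SubNFA Sigma S} {q q' : S} {i i' n1 n2 : ℕ} {r : Option ℕ} : q ∉ A.F →
      A.T q = SubTrans.sub Kind.at A' q' → Mt w A' A'.q0 i (some i') n1 →
      Mt w A q' i' r n2 → Mt w A q i r (n1 + n2 + 1)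
  | subF {A A' : SubNFA Sigma S} {q q' : S} {i n : ℕ} : q ∉ A.F →
      A.T q = SubTrans.sub Kind.at A' q' → Mt w A' A'.q0 i none n →
      Mt w A q i none (n + 1)

theorem Mt.det {w : List Sigma} {A : SubNFA Sigma S} {q : S} {i n : ℕ} {r : Option ℕ}
    (h : Mt w A q i r n) : ∀ {r' n'}, Mt w A q i r' n' → r = r' ∧ n = n' := by
  induction h with
  | acc hF => intro r' n' h'; cases h' <;> simp_all
  | eps hF hT _ ih =>
    intro r' n' h'
    cases h' with
    | eps hF' hT' h1 =>
      rw [hT] at hT'; injection hT' with e; subst e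
      have := ih h1; simp_all
    | _ => simp_all
  | brS hF hT _ ih =>
    intro r' n' h'
    cases h' with
    | brS hF' hT' h1 =>
      rw [hT] at hT'; injection hT' with e e2; subst e e2
      have := ih h1; simp_all
    | brF hF' hT' h1 h2 =>
      rw [hT] at hT'; injection hT' with e e2; subst e e2
      have := ih h1; simp_all
    | _ => simp_all
  | brF hF hT _ _ ih ih2 =>
    intro r' n' h'
    cases h' with
    | brS hF' hT' h1 =>
      rw [hT] at hT'; injection hT' with e e2; subst e e2
      have := ih h1; simp_all
    | brF hF' hT' h1 h2 =>
      rw [hT] at hT'; injection hT' with e e2; subst e e2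
      have := ih h1; have := ih2 h2; simp_all
    | _ => simp_all
  | chS hF hT hw _ ih =>
    intro r' n' h'
    cases h' with
    | chS hF' hT' hw' h1 =>
      rw [hT] at hT'; injection hT' with e e2; subst e e2
      have := ih h1; simp_all
    | _ => simp_all
  | chF hF hT hw =>
    intro r' n' h'
    cases h' <;> simp_all
  | subS hF hT _ _ ih ih2 =>
    intro r' n' h'
    cases h' with
    | subS hF' hT' h1 h2 =>
      rw [hT] at hT'; injection hT' with _ e e2; subst e e2
      obtain ⟨e3, e4⟩ := ih h1
      injection e3 with e3; subst e3 e4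
      have := ih2 h2; simp_all
    | subF hF' hT' h1 =>
      rw [hT] at hT'; injection hT' with _ e e2; subst e e2
      have := ih h1; simp_all
    | _ => simp_all
  | subF hF hT _ ih =>
    intro r' n' h'
    cases h' with
    | subS hF' hT' h1 h2 =>
      rw [hT] at hT'; injection hT' with _ e e2; subst e e2
      have := ih h1; simp_all
    | subF hF' hT' h1 =>
      rw [hT] at hT'; injection hT' with _ e e2; subst e e2
      have := ih h1; simp_all
    | _ => simp_all

end Local

/-! ## Soundness of the memoization table and the main induction -/

section Main

/-- `Fails w A0 B d k p j`: from `(k, p)` in the component `B` at depth `d`, matching together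
with the enclosing continuations fails at level `j`. -/
inductive Fails (w : List Sigma) (A0 : SubNFA Sigma S) :
    SubNFA Sigma S → ℕ → S → ℕ → ℕ → Prop where
  | loc {B : SubNFA Sigma S} {d p n : ℕ} {k : S} : Mt w B k p none n → Fails w A0 B d k p d
  | cont {B C : SubNFA Sigma S} {d p n i' j : ℕ} {k c c' : S} :
      Mt w B k p (some i') n → (C, d) ∈ A0.compsD → c ∈ C.Q →
      C.T c = SubTrans.sub Kind.at B c' → Fails w A0 C d c' i' j → Fails w A0 B (d + 1) k p j

theorem Fails.le {w : List Sigma} {A0 B : SubNFA Sigma S} {d p j : ℕ} {k : S}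
    (h : Fails w A0 B d k p j) : j ≤ d := by
  induction h with
  | loc _ => exact le_rfl
  | cont _ _ _ _ _ ih => omega

theorem Fails.mt {w : List Sigma} {A0 B : SubNFA Sigma S} {d p j : ℕ} {k : S}
    (h : Fails w A0 B d k p j) :
    (j = d ∧ ∃ n, Mt w B k p none n) ∨ (j < d ∧ ∃ i' n, Mt w B k p (some i') n) := by
  cases h with
  | loc h => exact Or.inl ⟨rfl, _, h⟩
  | cont h _ _ _ h' => exact Or.inr ⟨by have := h'.le; omega, _, _, h⟩

theorem Fails.transfer {w : List Sigma} {A0 B : SubNFA Sigma S} {d p j p' n n' : ℕ} {k k' : S}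
    {res : Option ℕ} (h : Fails w A0 B d k p j) (h1 : Mt w B k p res n)
    (h2 : Mt w B k' p' res n') : Fails w A0 B d k' p' j := by
  cases h with
  | loc h =>
    obtain ⟨rfl, _⟩ := h.det h1
    exact Fails.loc h2
  | cont h a b c h' =>
    obtain ⟨rfl, _⟩ := h.det h1
    exact Fails.cont h2 a b c h'

/-- Soundness of a memoization table. -/
def Sound (w : List Sigma) (A0 : SubNFA Sigma S) (M : S × ℕ → Option ℕ) : Prop :=
  ∀ B d k p j, (B, d) ∈ A0.compsD → k ∈ B.Q → M (k, p) = some j → Fails w A0 B d k p j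

/-- Delayed keys: `(k, p)` leads to the success of the component `A` at `i'`. -/
inductive KOK (w : List Sigma) : SubNFA Sigma S → ℕ → S → ℕ → Prop where
  | here {A : SubNFA Sigma S} {i' p n : ℕ} {k : S} : k ∈ A.Q → Mt w A k p (some i') n →
      KOK w A i' k p
  | deep {A A' : SubNFA Sigma S} {i' p p' n : ℕ} {k c c' : S} : c ∈ A.Q →
      A.T c = SubTrans.sub Kind.at A' c' → KOK w A' p' k p → Mt w A c' p' (some i') n →
      KOK w A i' k p

theorem KOK.fails {w : List Sigma} {A0 A : SubNFA Sigma S} {i' p : ℕ} {k : S}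
    (h : KOK w A i' k p) : ∀ {C : SubNFA Sigma S} {d j : ℕ} {c c' : S}, (C, d) ∈ A0.compsD →
      c ∈ C.Q → C.T c = SubTrans.sub Kind.at A c' → Fails w A0 C d c' i' j →
      ∃ B e, (B, e) ∈ A0.compsD ∧ k ∈ B.Q ∧ Fails w A0 B e k p j := by
  induction h with
  | here hk hM =>
    intro C d j c c' hC hc hT hF
    exact ⟨_, _, compsD_closed A0 C d c c' _ hC hc hT, hk, Fails.cont hM hC hc hT hF⟩
  | deep hc0 hT0 _ hM ih =>
    intro C d j c c' hC hc hT hF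
    exact ih (compsD_closed A0 C d c c' _ hC hc hT) hc0 hT0 (Fails.cont hM hC hc hT hF)

/-- Soundness of a result. -/
def ROK (w : List Sigma) (A0 A : SubNFA Sigma S) (d : ℕ) (q : S) (i : ℕ) : AtResult S → Prop
  | .successAt i' K => (∃ n, Mt w A q i (some i') n) ∧ ∀ kp ∈ K, KOK w A i' kp.1 kp.2
  | .failure j => Fails w A0 A d q i j

theorem ROK.transfer {w : List Sigma} {A0 A : SubNFA Sigma S} {d i i' n n' : ℕ} {q q' : S}
    {r : AtResult S} {res : Option ℕ} (h : ROK w A0 A d q' i' r) (h1 : Mt w A q' i' res n)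
    (h2 : Mt w A q i res n') : ROK w A0 A d q i r := by
  cases r with
  | successAt i2 K =>
    obtain ⟨⟨m, hm⟩, hK⟩ := h
    obtain ⟨rfl, _⟩ := hm.det h1
    exact ⟨⟨_, h2⟩, hK⟩
  | failure j => exact Fails.transfer h h1 h2

theorem ROK.final [DecidableEq S] {w : List Sigma} {A0 A : SubNFA Sigma S} {d i : ℕ} {q : S}
    {r : AtResult S} (hq : q ∈ A.Q) (h : ROK w A0 A d q i r) :
    ROK w A0 A d q i (atFinal q i r) := by
  cases r with
  | successAt i2 K =>
    obtain ⟨⟨m, hm⟩, hK⟩ := h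
    refine ⟨⟨m, hm⟩, ?_⟩
    intro kp hkp
    rcases Finset.mem_insert.1 hkp with rfl | hkp
    · exact KOK.here hq hm
    · exact hK kp hkp
  | failure j => exact h

theorem Sound.record [DecidableEq S] {w : List Sigma} {A0 A : SubNFA Sigma S} {d i : ℕ} {q : S}
    {r : AtResult S} {M : S × ℕ → Option ℕ} (hN : A0.allStates.Nodup)
    (hA : (A, d) ∈ A0.compsD) (hq : q ∈ A.Q) (hM : Sound w A0 M) (h : ROK w A0 A d q i r) :
    Sound w A0 (atRecord M q i r) := by
  cases r with
  | successAt i2 K => exact hM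
  | failure j =>
    intro B e k p j' hB hk hMk
    simp only [atRecord] at hMk
    split_ifs at hMk with hkq
    · simp only [Prod.mk.injEq] at hkq
      obtain ⟨rfl, rfl⟩ := hkq
      injection hMk with hj; subst hj
      obtain ⟨rfl, rfl⟩ := comps_unique A0 hN hA hB hq hk
      exact h
    · exact hM B e k p j' hB hk hMk

theorem Sound.batch [DecidableEq S] {w : List Sigma} {A0 C A : SubNFA Sigma S} {d i' j : ℕ}
    {c c' : S} {K : Finset (S × ℕ)} {M : S × ℕ → Option ℕ} (hN : A0.allStates.Nodup)
    (hC : (C, d) ∈ A0.compsD) (hc : c ∈ C.Q) (hT : C.T c = SubTrans.sub Kind.at A c')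
    (hF : Fails w A0 C d c' i' j) (hM : Sound w A0 M)
    (hK : ∀ kp ∈ K, KOK w A i' kp.1 kp.2) : Sound w A0 (atBatch M K j) := by
  intro B e k p j' hB hk hMk
  simp only [atBatch] at hMk
  split_ifs at hMk with hkq
  · injection hMk with hj; subst hj
    obtain ⟨B', e', hB', hk', hF'⟩ := (hK _ hkq).fails hC hc hT hF
    obtain ⟨rfl, rfl⟩ := comps_unique A0 hN hB' hB hk' hk
    exact hF'
  · exact hM B e k p j' hB hk hMk

/-- Structure of a run whose calls all have size at most `n`. -/
def RunGood (w : List Sigma) (A0 : SubNFA Sigma S) (s : List (AtRunElem S)) (n : ℕ) : Prop :=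
  Neutral AtRunElem.isRet s ∧ NoRe s ∧
    ∀ k p, (AtRunElem.call k p ∈ s ∨ AtRunElem.memo k p ∈ s) →
      ∃ B d r m, (B, d) ∈ A0.compsD ∧ k ∈ B.Q ∧ Mt w B k p r m ∧ m ≤ n

theorem RunGood.nil (w : List Sigma) (A0 : SubNFA Sigma S) (n : ℕ) : RunGood w A0 [] n :=
  ⟨Neutral.nil _, trivial, by simp⟩

theorem RunGood.append {w : List Sigma} {A0 : SubNFA Sigma S} {s1 s2 : List (AtRunElem S)}
    {n1 n2 n : ℕ} (h1 : RunGood w A0 s1 n1) (h2 : RunGood w A0 s2 n2) (hn1 : n1 ≤ n)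
    (hn2 : n2 ≤ n) : RunGood w A0 (s1 ++ s2) n := by
  refine ⟨h1.1.append h2.1, h1.2.1.append h2.2.1, ?_⟩
  intro k p hkp
  have : (AtRunElem.call k p ∈ s1 ∨ AtRunElem.memo k p ∈ s1) ∨
      (AtRunElem.call k p ∈ s2 ∨ AtRunElem.memo k p ∈ s2) := by
    simp only [List.mem_append] at hkp; tauto
  rcases this with h | h
  · obtain ⟨B, d, r, m, a, b, c, e⟩ := h1.2.2 k p h
    exact ⟨B, d, r, m, a, b, c, by omega⟩
  · obtain ⟨B, d, r, m, a, b, c, e⟩ := h2.2.2 k p h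
    exact ⟨B, d, r, m, a, b, c, by omega⟩

theorem RunGood.block {w : List Sigma} {A0 A : SubNFA Sigma S} {s : List (AtRunElem S)}
    {d i n n' : ℕ} {q : S} {res : Option ℕ} {e : AtRunElem S} (hN : A0.allStates.Nodup)
    (hA : (A, d) ∈ A0.compsD) (hq : q ∈ A.Q) (h : RunGood w A0 s n)
    (hM : Mt w A q i res n') (hn : n < n') (he : e.isRet = true) :
    RunGood w A0 (.call q i :: s ++ [e]) n' := by
  have hnot : ¬ (AtRunElem.call q i ∈ s ∨ AtRunElem.memo q i ∈ s) := by
    intro hh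
    obtain ⟨B, d', r, m, a, b, c, hm⟩ := h.2.2 q i hh
    obtain ⟨rfl, rfl⟩ := comps_unique A0 hN hA a hq b
    obtain ⟨_, rfl⟩ := c.det hM
    omega
  have hec : ∀ k p, AtRunElem.call k p ≠ e ∧ AtRunElem.memo k p ≠ e := by
    intro k p
    constructor <;> (rintro rfl; simp [AtRunElem.isRet] at he)
  refine ⟨h.1.block rfl he, ⟨?_, h.2.1.append ⟨?_, trivial⟩⟩, ?_⟩
  · intro q1 i1 hqi
    injection hqi with h1 h2
    subst h1 h2
    refine ⟨s ++ [e], [], by simp, fun t => h.1.block_zero rfl he t, ?_, ?_⟩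
    · simp only [List.mem_append, List.mem_singleton, not_or]
      exact ⟨fun hh => hnot (Or.inl hh), (hec _ _).1⟩
    · simp only [List.mem_append, List.mem_singleton, not_or]
      exact ⟨fun hh => hnot (Or.inr hh), (hec _ _).2⟩
  · intro q1 i1 hqi
    exact absurd hqi.symm (hec q1 i1).1
  · intro k p hkp
    have : (k = q ∧ p = i) ∨ (AtRunElem.call k p ∈ s ∨ AtRunElem.memo k p ∈ s) := by
      simp only [List.cons_append, List.mem_cons, List.mem_append, List.not_mem_nil, or_false,
        (hec k p).1, (hec k p).2, AtRunElem.call.injEq, reduceCtorEq, false_or] at hkp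
      tauto
    rcases this with ⟨rfl, rfl⟩ | h2
    · exact ⟨A, d, res, n', hA, hq, hM, le_rfl⟩
    · obtain ⟨B, d, r, m, a, b, c, e⟩ := h.2.2 k p h2
      exact ⟨B, d, r, m, a, b, c, by omega⟩

theorem elem_isRet (r : AtResult S) : (r.elem).isRet = true := by
  cases r <;> rfl

/-- The main induction. -/
theorem memoAt_main [DecidableEq S] (A0 : SubNFA Sigma S) (hWF : A0.WF) (w : List Sigma)
    {A : SubNFA Sigma S} {q : S} {i : ℕ} {M M' : S × ℕ → Option ℕ} {r : AtResult S}
    {s : List (AtRunElem S)} (h : MemoAtRun A0 w A q i M M' r s) :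
    ∀ d, (A, d) ∈ A0.compsD → q ∈ A.Q → Sound w A0 M →
      Sound w A0 M' ∧ ROK w A0 A d q i r ∧ ∃ res n, Mt w A q i res n ∧ RunGood w A0 s n := by
  have hN := hWF.2
  have hL : ∀ {B : SubNFA Sigma S} {d : ℕ}, (B, d) ∈ A0.compsD → B.LocalOK := fun hB =>
    hWF.1 _ (List.mem_map.2 ⟨_, hB, rfl⟩)
  induction h with
  | @memoHit A q i j M hM =>
    intro d hA hq hS
    have hF := hS A d q i j hA hq hM
    refine ⟨hS, hF, ?_⟩
    have key : ∃ res n, Mt w A q i res n := by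
      rcases hF.mt with ⟨_, n, h⟩ | ⟨_, i', n, h⟩
      · exact ⟨_, _, h⟩
      · exact ⟨_, _, h⟩
    obtain ⟨res, n, hm⟩ := key
    refine ⟨res, n, hm, ?_, ?_, ?_⟩
    · exact (Neutral.nil _).block (c := AtRunElem.memo q i) rfl rfl
    · simp [NoRe]
    · intro k p hkp
      simp at hkp
      obtain ⟨rfl, rfl⟩ := hkp
      exact ⟨A, d, res, n, hA, hq, hm, le_rfl⟩
  | @accept A q i M hM hF =>
    intro d hA hq hS
    have hm : Mt w A q i (some i) 1 := Mt.acc hF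
    refine ⟨hS, ⟨⟨_, hm⟩, ?_⟩, _, _, hm, ?_⟩
    · intro kp hkp
      rw [Finset.mem_singleton] at hkp
      subst hkp
      exact KOK.here hq hm
    · exact RunGood.block hN hA hq (RunGood.nil w A0 0) hm (by omega) rfl
  | @eps A q q' i M M' r s hM hF hT _ ih =>
    intro d hA hq hS
    have hq' : q' ∈ A.Q := by have := (hL hA).2.2 q hq hF; rw [hT] at this; exact this
    obtain ⟨hS', hR, res, n, hm, hG⟩ := ih d hA hq' hS
    have hm2 := Mt.eps hF hT hm
    have hR2 := hR.transfer hm hm2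
    exact ⟨hS'.record hN hA hq hR2, hR2.final hq, _, _, hm2,
      hG.block hN hA hq hm2 (by omega) (elem_isRet r)⟩
  | @branchNoBT A q q' q'' i M M' r s hM hF hT _ hj ih =>
    intro d hA hq hS
    have hq' : q' ∈ A.Q := by have := (hL hA).2.2 q hq hF; rw [hT] at this; exact this.1
    obtain ⟨hS', hR, res, n, hm, hG⟩ := ih d hA hq' hS
    have hsome : ∃ i', res = some i' := by
      cases r with
      | successAt i' K =>
        obtain ⟨⟨m, hm'⟩, _⟩ := hR
        exact ⟨i', (hm.det hm').1⟩
      | failure j =>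
        have hjd := hj j rfl
        rw [nu_eq A0 hN hA hq] at hjd
        rcases Fails.mt hR with ⟨h, _⟩ | ⟨_, i', m, hm'⟩
        · exact absurd h hjd
        · exact ⟨i', (hm.det hm').1⟩
    obtain ⟨i', rfl⟩ := hsome
    have hm2 := Mt.brS hF hT hm
    have hR2 := hR.transfer hm hm2
    exact ⟨hS'.record hN hA hq hR2, hR2.final hq, _, _, hm2,
      hG.block hN hA hq hm2 (by omega) (elem_isRet r)⟩
  | @branchBTSucc A q q' q'' i i'' K M M1 M2 s1 s2 hM hF hT _ _ ih1 ih2 =>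
    intro d hA hq hS
    have hq' : q' ∈ A.Q ∧ q'' ∈ A.Q := by
      have := (hL hA).2.2 q hq hF; rw [hT] at this; exact this
    obtain ⟨hS1, hR1, res1, n1, hm1, hG1⟩ := ih1 d hA hq'.1 hS
    obtain ⟨hS2, hR2, res2, n2, hm2, hG2⟩ := ih2 d hA hq'.2 hS1
    have hnone : res1 = none := by
      rcases Fails.mt hR1 with ⟨_, m, hm'⟩ | ⟨h, _⟩
      · exact (hm1.det hm').1
      · rw [nu_eq A0 hN hA hq] at h; omega
    subst hnone
    have hm := Mt.brF hF hT hm1 hm2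
    have hR := hR2.transfer hm2 hm
    exact ⟨hS2, hR.final hq, _, _, hm,
      (hG1.append hG2 (n := n1 + n2) (by omega) (by omega)).block hN hA hq hm (by omega) rfl⟩
  | @branchBTFail A q q' q'' i j' M M1 M2 s1 s2 hM hF hT _ _ ih1 ih2 =>
    intro d hA hq hS
    have hq' : q' ∈ A.Q ∧ q'' ∈ A.Q := by
      have := (hL hA).2.2 q hq hF; rw [hT] at this; exact this
    obtain ⟨hS1, hR1, res1, n1, hm1, hG1⟩ := ih1 d hA hq'.1 hS
    obtain ⟨hS2, hR2, res2, n2, hm2, hG2⟩ := ih2 d hA hq'.2 hS1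
    have hnone : res1 = none := by
      rcases Fails.mt hR1 with ⟨_, m, hm'⟩ | ⟨h, _⟩
      · exact (hm1.det hm').1
      · rw [nu_eq A0 hN hA hq] at h; omega
    subst hnone
    have hm := Mt.brF hF hT hm1 hm2
    have hR := hR2.transfer hm2 hm
    have hmin : min (A0.nu q) j' = j' := by
      rw [nu_eq A0 hN hA hq]; exact min_eq_right (Fails.le hR2)
    rw [hmin]
    exact ⟨hS2.record hN hA hq hR, hR, _, _, hm,
      (hG1.append hG2 (n := n1 + n2) (by omega) (by omega)).block hN hA hq hm (by omega) rfl⟩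
  | @charSucc A q q' σ i M M' r s hM hF hT hw _ ih =>
    intro d hA hq hS
    have hq' : q' ∈ A.Q := by have := (hL hA).2.2 q hq hF; rw [hT] at this; exact this
    obtain ⟨hS', hR, res, n, hm, hG⟩ := ih d hA hq' hS
    have hm2 := Mt.chS hF hT hw hm
    have hR2 := hR.transfer hm hm2
    exact ⟨hS'.record hN hA hq hR2, hR2.final hq, _, _, hm2,
      hG.block hN hA hq hm2 (by omega) (elem_isRet r)⟩
  | @charFail A q q' σ i M hM hF hT hw =>
    intro d hA hq hS
    have hm : Mt w A q i none 1 := Mt.chF hF hT hw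
    have hR : ROK w A0 A d q i (.failure (A0.nu q)) := by
      rw [nu_eq A0 hN hA hq]; exact Fails.loc hm
    exact ⟨hS.record hN hA hq hR, hR, _, _, hm,
      RunGood.block hN hA hq (RunGood.nil w A0 0) hm (by omega) rfl⟩
  | @subSuccSucc A A' q q' i i' i'' K' K'' M M1 M2 s1 s2 hM hF hT _ _ ih1 ih2 =>
    intro d hA hq hS
    have hq' : q' ∈ A.Q := by have := (hL hA).2.2 q hq hF; rw [hT] at this; exact this
    have hA' := compsD_closed A0 A d q q' A' hA hq hT
    obtain ⟨hS1, ⟨⟨m1, hm1'⟩, hK1⟩, res1, n1, hm1, hG1⟩ := ih1 (d + 1) hA' (hL hA').1 hS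
    obtain ⟨hS2, ⟨⟨m2, hm2'⟩, hK2⟩, res2, n2, hm2, hG2⟩ := ih2 d hA hq' hS1
    obtain ⟨rfl, rfl⟩ := hm1.det hm1'
    obtain ⟨rfl, rfl⟩ := hm2.det hm2'
    have hm := Mt.subS hF hT hm1 hm2
    have hR : ROK w A0 A d q i (.successAt i'' (K' ∪ K'')) := by
      refine ⟨⟨_, hm⟩, ?_⟩
      intro kp hkp
      rcases Finset.mem_union.1 hkp with h | h
      · exact KOK.deep hq hT (hK1 kp h) hm2
      · exact hK2 kp h
    exact ⟨hS2, hR.final hq, _, _, hm,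
      (hG1.append hG2 (n := n1 + n2) (by omega) (by omega)).block hN hA hq hm (by omega) rfl⟩
  | @subSuccFail A A' q q' i i' j K' M M1 M2 s1 s2 hM hF hT _ _ ih1 ih2 =>
    intro d hA hq hS
    have hq' : q' ∈ A.Q := by have := (hL hA).2.2 q hq hF; rw [hT] at this; exact this
    have hA' := compsD_closed A0 A d q q' A' hA hq hT
    obtain ⟨hS1, ⟨⟨m1, hm1'⟩, hK1⟩, res1, n1, hm1, hG1⟩ := ih1 (d + 1) hA' (hL hA').1 hS
    obtain ⟨hS2, hR2, res2, n2, hm2, hG2⟩ := ih2 d hA hq' hS1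
    obtain ⟨rfl, rfl⟩ := hm1.det hm1'
    have hm := Mt.subS hF hT hm1 hm2
    have hR := hR2.transfer hm2 hm
    exact ⟨(hS2.batch hN hA hq hT hR2 hK1).record hN hA hq hR, hR, _, _, hm,
      (hG1.append hG2 (n := n1 + n2) (by omega) (by omega)).block hN hA hq hm (by omega) rfl⟩
  | @subFailHigh A A' q q' i j M M1 s1 hM hF hT _ hj ih1 =>
    intro d hA hq hS
    have hA' := compsD_closed A0 A d q q' A' hA hq hT
    obtain ⟨hS1, hR1, res1, n1, hm1, hG1⟩ := ih1 (d + 1) hA' (hL hA').1 hS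
    have hnu := nu_eq A0 hN hA hq
    have hnone : res1 = none := by
      rcases Fails.mt hR1 with ⟨_, m, hm'⟩ | ⟨h, _⟩
      · exact (hm1.det hm').1
      · omega
    subst hnone
    have hm := Mt.subF hF hT hm1
    have hR : ROK w A0 A d q i (.failure (A0.nu q)) := by
      rw [hnu]; exact Fails.loc hm
    exact ⟨hS1.record hN hA hq hR, hR, _, _, hm, hG1.block hN hA hq hm (by omega) rfl⟩
  | @subFailLow A A' q q' i j M M1 s1 hM hF hT _ hj ih1 =>
    intro d hA hq hS
    have hA' := compsD_closed A0 A d q q' A' hA hq hT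
    obtain ⟨hS1, hR1, res1, n1, hm1, hG1⟩ := ih1 (d + 1) hA' (hL hA').1 hS
    rw [nu_eq A0 hN hA hq] at hj
    have hR1' : Fails w A0 A' (d + 1) A'.q0 i j := hR1
    generalize hd : d + 1 = d1 at hR1'
    cases hR1' with
    | loc _ => omega
    | @cont _ C d2 _ _ i' _ _ c c' hm1' hC hc hTc hF' =>
      have hdd : d2 = d := by omega
      subst hdd
      have hcq : c = q := link_unique A0 hN C A A' A' _ _ c q c' q' A'.q0 hC hA hc hq hTc hT
        (hL hA').1 (hL hA').1
      subst hcq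
      obtain ⟨rfl, _⟩ := comps_unique A0 hN hC hA hc hq
      rw [hT] at hTc
      injection hTc with _ _ e
      subst e
      obtain ⟨rfl, rfl⟩ := hm1.det hm1'
      have key : ∃ res n, Mt w C q' i' res n := by
        rcases hF'.mt with ⟨_, n, h⟩ | ⟨_, i', n, h⟩
        · exact ⟨_, _, h⟩
        · exact ⟨_, _, h⟩
      obtain ⟨res2, n2, hm2⟩ := key
      have hm := Mt.subS hF hT hm1 hm2
      have hR : ROK w A0 C d2 c i (.failure j) := Fails.transfer hF' hm2 hm
      exact ⟨hS1.record hN hA hq hR, hR, _, _, hm, hG1.block hN hA hq hm (by omega) rfl⟩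

end Main

/-- **Lemma 11** (no re-entry during a pending call of `Memo-at`): for every run `s` of
an execution of `Memo-at` and every index `ℓ` with `s[ℓ] = C(q, i)`, neither `C(q, i)`
nor `M(q, i)` appears in the subsequence `s[ℓ+1] … s[φ_s(ℓ)]`. -/
theorem memoAt_no_reentry {Sigma S : Type} [DecidableEq S]
    (A : SubNFA Sigma S) (hWF : A.WF) (hAt : A.IsAtNFA) (hLoop : A.NoEpsLoops)
    (w : List Sigma) (i0 : ℕ) (hi0 : i0 ≤ w.length)
    {M' : S × ℕ → Option ℕ} {r : AtResult S} {s : List (AtRunElem S)}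
    (hrun : MemoAtRun A w A A.q0 i0 (fun _ => none) M' r s)
    {q : S} {i ℓ m : ℕ}
    (hc : s[ℓ]? = some (AtRunElem.call q i))
    (hφ : phi AtRunElem.isRet s ℓ = some m) :
    ∀ ℓ', ℓ + 1 ≤ ℓ' → ℓ' ≤ m →
      s[ℓ']? ≠ some (AtRunElem.call q i) ∧ s[ℓ']? ≠ some (AtRunElem.memo q i) := by
  obtain ⟨_, _, _, _, _, hG⟩ := memoAt_main A hWF w hrun 0 (compsD_self A)
    (hWF.1 A (List.mem_map.2 ⟨_, compsD_self A, rfl⟩)).1 (by intro B d k p j _ _ h; simp at h)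
  exact hG.2.1.final hc hφ

end RegexMemo
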